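/- arXiv:1507.03426 — 2 statements merged into one kernel-verified Lean document; each statement's English description precedes it below -/
import Mathlib

section
/- Let k, m, n, t ∈ ℕ with 0 ≤ k ≤ m ≤ n, and set I(t) = (1/(2π))·∫_{-1}^{1} [4(1-x²)·∏_{j=1}^{k}(1-2(2x²-1)q^{2j}+q^{4j}) / √(1-x²)] · C_{m-k}(x;q^{2k+2}|q²) · C_{n-k}(x;q^{2k+2}|q²) · U_{m+n-2t}(x) dx. Then I(t) = 0 whenever m < t and 2t ≤ m+n, while for 0 ≤ t ≤ m one has I(t) = (-1)^k q^{k(k+1)} (q²;q²)_k · [(q^{2k+2};q²)_{m+n-2k} / (q²;q²)_{m+n-k}] · [(q^{2k+2};q²)_{m-k} / (q²;q²)_{m-k}] · [(q^{2k+2};q²)_{n-k} / (q²;q²)_{n-k}] · R_k(μ(t);1,1,q^{-2m-2},q^{-2n-2};q²). -/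
open Finset Polynomial MeasureTheory Matrix
open scoped BigOperators ComplexOrder

noncomputable section

/-- q-shifted factorial `(a;p)_n`. -/
def qp (a p : ℂ) (n : ℕ) : ℂ := ∏ j ∈ Finset.range n, (1 - a * p ^ j)

/-- q-Racah polynomial `R_n(μ(x);α,β,γ,δ;p)`. -/
def qRacah (p α β γ δ : ℂ) (n x : ℕ) : ℂ :=
  ∑ k ∈ Finset.range (min n x + 1),
    qp (p ^ (-(n : ℤ))) p k * qp (α * β * p ^ (n + 1)) p k *
        qp (p ^ (-(x : ℤ))) p k * qp (γ * δ * p ^ (x + 1)) p k /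
      (qp (α * p) p k * qp (β * δ * p) p k * qp (γ * p) p k * qp p p k) * p ^ k

/-- `IsUltra C` says that for each base `p`, parameter `β` and degree `n`, `C p β n` is
the continuous q-ultraspherical polynomial: it has degree at most `n` and its values at
`(z+z⁻¹)/2` are given by the symmetric Laurent sum. -/
def IsUltra (C : ℂ → ℂ → ℕ → Polynomial ℂ) : Prop :=
  ∀ (p β : ℂ) (n : ℕ),
    (C p β n).degree ≤ (n : ℕ) ∧
      ∀ z : ℂ, z ≠ 0 →
        (C p β n).eval ((z + z⁻¹) / 2) =
          ∑ r ∈ Finset.range (n + 1),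
            qp β p r * qp β p (n - r) / (qp p p r * qp p p (n - r)) * z ^ ((n : ℤ) - 2 * r)

/-- The matrix-valued polynomial `P_n` (entries in `Polynomial ℂ`); here `L = 2ℓ`. -/
def Pm (q : ℂ) (L : ℕ) (C : ℂ → ℂ → ℕ → Polynomial ℂ) (n : ℕ) :
    Matrix (Fin (L + 1)) (Fin (L + 1)) (Polynomial ℂ) :=
  Matrix.of fun i j =>
    ∑ k ∈ Finset.Icc (i : ℕ) (min L (n + (j : ℕ))),
      Polynomial.C
          ((-1 : ℂ) ^ k *
            q ^ ((n : ℤ) + (2 * (k : ℤ) + 1) * ((k : ℤ) - ((i : ℕ) : ℤ)) +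
                ((j : ℕ) : ℤ) * (2 * (k : ℤ) + 1) + 2 * (k : ℤ) * ((L : ℤ) + (n : ℤ) + 1) -
                (k : ℤ) ^ 2) *
            (qp (q ^ 2) (q ^ 2) k * qp (q ^ 2) (q ^ 2) (k + (i : ℕ)) /
              (qp (q ^ 2) (q ^ 2) (2 * k) * qp (q ^ 2) (q ^ 2) (i : ℕ))) *
            (qp (q ^ (-(2 * (L : ℤ)))) (q ^ 2) k *
                qp (q ^ (-(2 * ((j : ℕ) : ℤ) + 2 * (n : ℤ)))) (q ^ 2) k /
              (qp (q ^ 2) (q ^ 2) k * qp (q ^ (2 * (L : ℤ) + 4)) (q ^ 2) k)) *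
            (qp (q ^ 2) (q ^ 2) (n + (j : ℕ) - k) /
              qp (q ^ (4 * (k : ℤ) + 4)) (q ^ 2) (n + (j : ℕ) - k)) *
            qRacah (q ^ 2) 1 1 (q ^ (-(2 * (n : ℤ) + 2 * ((j : ℕ) : ℤ) + 2)))
              (q ^ (-(2 * (L : ℤ) + 2))) k (j : ℕ)) *
        (C (q ^ 2) (q ^ (-(2 * (k : ℤ)))) (k - (i : ℕ)) *
          C (q ^ 2) (q ^ (2 * (k : ℤ) + 2)) (n + (j : ℕ) - k))

/-- Evaluation of the matrix-valued polynomial `P_n` at a point. -/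
def evP (q : ℂ) (L : ℕ) (C : ℂ → ℂ → ℕ → Polynomial ℂ) (n : ℕ) (x : ℂ) :
    Matrix (Fin (L + 1)) (Fin (L + 1)) ℂ :=
  (Pm q L C n).map (Polynomial.eval x)

/-- The coefficients `α_t(m,n)` of the weight. -/
def alphaC (q : ℂ) (L m n t : ℕ) : ℂ :=
  q ^ (2 * (n : ℤ) * ((L : ℤ) + 1) - (n : ℤ) ^ 2 - (2 * (L : ℤ) + 3) * (t : ℤ) + (t : ℤ) ^ 2 -
      (L : ℤ) + (m : ℤ)) *
    ((1 - q ^ (2 * (L : ℤ) + 2)) / (1 - q ^ (2 * (m : ℤ) + 2))) *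
    (qp (q ^ 2) (q ^ 2) (L - n) * qp (q ^ 2) (q ^ 2) n / qp (q ^ 2) (q ^ 2) L) *
    ((-1 : ℂ) ^ ((m : ℤ) - (t : ℤ)) * qp (q ^ (2 * (m : ℤ) - 2 * (L : ℤ))) (q ^ 2) (n - t) /
      qp (q ^ (2 * (m : ℤ) + 4)) (q ^ 2) (n - t)) *
    (qp (q ^ (2 * (L : ℤ) + 4 - 2 * (t : ℤ))) (q ^ 2) t / qp (q ^ 2) (q ^ 2) t)

/-- The matrix weight `W(x)`. -/
def Wm (q : ℂ) (L : ℕ) (x : ℂ) : Matrix (Fin (L + 1)) (Fin (L + 1)) ℂ :=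
  Matrix.of fun i j =>
    ∑ t ∈ Finset.range (max (i : ℕ) (j : ℕ) + 1),
      alphaC q L (min (i : ℕ) (j : ℕ)) (max (i : ℕ) (j : ℕ)) t *
        (Polynomial.Chebyshev.U ℂ
            ((min (i : ℕ) (j : ℕ) : ℤ) + (max (i : ℕ) (j : ℕ) : ℤ) - 2 * (t : ℤ))).eval x

/-- The antidiagonal involution `J`. -/
def Jm (L : ℕ) : Matrix (Fin (L + 1)) (Fin (L + 1)) ℂ :=
  Matrix.of fun i j => if (i : ℕ) + (j : ℕ) = L then 1 else 0

/-- The diagonal leading-coefficient matrix `Γ_n`. -/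
def Gam (q : ℂ) (L n : ℕ) : Matrix (Fin (L + 1)) (Fin (L + 1)) ℂ :=
  Matrix.diagonal fun i =>
    2 ^ n * q ^ n * qp (q ^ (2 * ((i : ℕ) : ℤ) + 2)) (q ^ 2) n *
        qp (q ^ (2 * (L : ℤ) - 2 * ((i : ℕ) : ℤ) + 2)) (q ^ 2) n /
      (qp (q ^ 2) (q ^ 2) n * qp (q ^ (2 * (L : ℤ) + 4)) (q ^ 2) n)

/-- The squared-norm matrix `G_m`. -/
def Gmat (q : ℂ) (L m : ℕ) : Matrix (Fin (L + 1)) (Fin (L + 1)) ℂ :=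
  Matrix.diagonal fun i =>
    q ^ (2 * (m : ℤ) - (L : ℤ)) * (1 - q ^ (2 * (L : ℤ) + 2)) ^ 2 /
      ((1 - q ^ (2 * (m : ℤ) + 2 * ((i : ℕ) : ℤ) + 2)) *
        (1 - q ^ (2 * (L : ℤ) - 2 * ((i : ℕ) : ℤ) + 2 * (m : ℤ) + 2)))

/-- The unipotent lower triangular matrix `L(x)` of the LDU decomposition. -/
def Lm (q : ℂ) (L : ℕ) (C : ℂ → ℂ → ℕ → Polynomial ℂ) (x : ℂ) :
    Matrix (Fin (L + 1)) (Fin (L + 1)) ℂ :=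
  Matrix.of fun m k =>
    if (k : ℕ) ≤ (m : ℕ) then
      q ^ (((m : ℕ) : ℤ) - ((k : ℕ) : ℤ)) * qp (q ^ 2) (q ^ 2) (m : ℕ) *
          qp (q ^ 2) (q ^ 2) (2 * (k : ℕ) + 1) /
          (qp (q ^ 2) (q ^ 2) ((m : ℕ) + (k : ℕ) + 1) * qp (q ^ 2) (q ^ 2) (k : ℕ)) *
        (C (q ^ 2) (q ^ (2 * (k : ℕ) + 2)) ((m : ℕ) - (k : ℕ))).eval x
    else 0

/-- The claimed inverse of `L(x)`. -/
def Linv (q : ℂ) (L : ℕ) (C : ℂ → ℂ → ℕ → Polynomial ℂ) (x : ℂ) :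
    Matrix (Fin (L + 1)) (Fin (L + 1)) ℂ :=
  Matrix.of fun k n =>
    if (n : ℕ) ≤ (k : ℕ) then
      q ^ ((2 * ((k : ℕ) : ℤ) + 1) * (((k : ℕ) : ℤ) - ((n : ℕ) : ℤ))) *
          qp (q ^ 2) (q ^ 2) (k : ℕ) * qp (q ^ 2) (q ^ 2) ((k : ℕ) + (n : ℕ)) /
          (qp (q ^ 2) (q ^ 2) (2 * (k : ℕ)) * qp (q ^ 2) (q ^ 2) (n : ℕ)) *
        (C (q ^ 2) (q ^ (-(2 * ((k : ℕ) : ℤ)))) ((k : ℕ) - (n : ℕ))).eval x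
    else 0

/-- The constants `c_k(ℓ)`. -/
def ckC (q : ℂ) (L k : ℕ) : ℂ :=
  q ^ (-(L : ℤ)) / 4 * (1 - q ^ (4 * k + 2)) * qp (q ^ 2) (q ^ 2) (L + k + 1) *
      qp (q ^ 2) (q ^ 2) (L - k) * qp (q ^ 2) (q ^ 2) k ^ 4 /
    (qp (q ^ 2) (q ^ 2) (2 * k + 1) ^ 2 * qp (q ^ 2) (q ^ 2) L ^ 2)

/-- The diagonal part `T(x)` of the LDU decomposition. -/
def Tm (q : ℂ) (L : ℕ) (x : ℂ) : Matrix (Fin (L + 1)) (Fin (L + 1)) ℂ :=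
  Matrix.diagonal fun k =>
    ckC q L (k : ℕ) *
      (4 * ∏ j ∈ Finset.Icc 1 (k : ℕ), (1 - 2 * (2 * x ^ 2 - 1) * q ^ (2 * j) + q ^ (4 * j)))

/-- The coefficient matrix `M₁(z)` of the q-difference operator `D₁`. -/
def M1f (q : ℂ) (L : ℕ) (z : ℂ) : Matrix (Fin (L + 1)) (Fin (L + 1)) ℂ :=
  Matrix.of fun i j =>
    if (j : ℕ) = (i : ℕ) + 1 then
      -(q ^ (1 - ((i : ℕ) : ℤ)) * (1 - q ^ (2 * (i : ℕ) + 2)) / (1 - q ^ 2) ^ 2 *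
        (z / (1 - z ^ 2)))
    else if (j : ℕ) = (i : ℕ) then
      q ^ (1 - ((i : ℕ) : ℤ)) / (1 - q ^ 2) ^ 2 *
        ((1 - q ^ (2 * (i : ℕ) + 2) * z ^ 2) / (1 - z ^ 2))
    else 0

/-- `M₂(z) = J M₁(z) J`. -/
def M2f (q : ℂ) (L : ℕ) (z : ℂ) : Matrix (Fin (L + 1)) (Fin (L + 1)) ℂ :=
  Jm L * M1f q L z * Jm L

/-- The eigenvalue matrix `Λ_n(1)`. -/
def Lam1 (q : ℂ) (L n : ℕ) : Matrix (Fin (L + 1)) (Fin (L + 1)) ℂ :=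
  Matrix.diagonal fun j =>
    (q ^ (-((j : ℕ) : ℤ) - (n : ℤ) - 1) + q ^ (((j : ℕ) : ℤ) + (n : ℤ) + 1)) / (q⁻¹ - q) ^ 2

/-- The eigenvalue matrix `Λ_n(2) = J Λ_n(1) J`. -/
def Lam2 (q : ℂ) (L n : ℕ) : Matrix (Fin (L + 1)) (Fin (L + 1)) ℂ :=
  Jm L * Lam1 q L n * Jm L

/-- The diagonal coefficient matrix `K₁(z)` of the decoupled operator. -/
def K1f (q : ℂ) (L : ℕ) (z : ℂ) : Matrix (Fin (L + 1)) (Fin (L + 1)) ℂ :=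
  Matrix.diagonal fun i =>
    q ^ (1 - ((i : ℕ) : ℤ)) / (1 - q ^ 2) ^ 2 *
      ((1 - q ^ (2 * (i : ℕ) + 2) * z ^ 2) / (1 - z ^ 2))

/-- The symmetric Laurent polynomial `Ĉ_k(z;β|p)`. -/
def Chat (p β : ℂ) (k : ℕ) (z : ℂ) : ℂ :=
  ∑ r ∈ Finset.range (k + 1),
    qp β p r * qp β p (k - r) / (qp p p r * qp p p (k - r)) * z ^ ((k : ℤ) - 2 * (r : ℤ))

/-- The matrix polynomials `R_n(x) = L(x)ᵀ P_n(x) Γ_n⁻¹`. -/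
def Rmat (q : ℂ) (L : ℕ) (C : ℂ → ℂ → ℕ → Polynomial ℂ) (n : ℕ) (x : ℂ) :
    Matrix (Fin (L + 1)) (Fin (L + 1)) ℂ :=
  (Lm q L C x)ᵀ * evP q L C n x * (Gam q L n)⁻¹

/-!
Put `x = cos θ`, `z = exp (i θ)`, `u = z²` and `p = q²`. The two ultraspherical polynomials become
`z ^ (k - m) * A(u)` and `z ^ (k - n) * B(u)` for polynomials `A`, `B` of degrees `m - k`, `n - k`,
and the weight becomes, up to a constant, `(p⁻ᵏ u; p)_{2k+1}` divided by a power of `u`. Hence the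
integral is a Fourier coefficient: up to that constant it is the coefficient of `u ^ t` in
`B(u) (p⁻ᵏ u; p)_{2k+1} A(u)`.

In degrees at most `n`, the q-Saalschütz sum evaluates the coefficients of `B(u) (p⁻ᵏ u; p)_{2k+1}`
in closed form, with a factor `(p⁻ᵏ; p)_i` that kills those of degree `k < i ≤ n`. So for `t ≤ n`
only `i ≤ k` contributes, and nothing does once `t > m = k + (m - k)`. For `t ≤ m` the remaining sum
over `i` is a terminating balanced `₄φ₃`, which Sears' transformation turns into the q-Racah
polynomial.

Sears' transformation itself is an interchange of two q-Saalschütz sums. Both are used cleared of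
denominators, so that they hold for all parameter values.
-/

section QPochhammer

variable {p : ℂ}

@[simp] lemma qp_zero (a p : ℂ) : qp a p 0 = 1 := by simp [qp]

lemma qp_succ (a p : ℂ) (n : ℕ) : qp a p (n + 1) = qp a p n * (1 - a * p ^ n) := by
  simp [qp, Finset.prod_range_succ]

lemma qp_add (a p : ℂ) (m n : ℕ) : qp a p (m + n) = qp a p m * qp (a * p ^ m) p n := by
  simp only [qp, Finset.prod_range_add, pow_add, mul_assoc]

lemma qp_succ' (a p : ℂ) (n : ℕ) : qp a p (n + 1) = (1 - a) * qp (a * p) p n := by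
  rw [add_comm, qp_add, qp_succ]
  simp

lemma qp_eq_mul_of_le (a p : ℂ) {m n : ℕ} (h : m ≤ n) :
    qp a p n = qp a p m * qp (a * p ^ m) p (n - m) := by
  rw [← qp_add, Nat.add_sub_cancel' h]

lemma qp_zpow_split (hp0 : p ≠ 0) {i k : ℕ} (hi : i ≤ k) (s : ℤ) :
    qp (p ^ s) p k = qp (p ^ s) p (k - i) * qp (p ^ (s + k - i)) p i := by
  rw [qp_eq_mul_of_le _ p (Nat.sub_le k i), Nat.sub_sub_self hi, ← zpow_natCast p (k - i),
    ← zpow_add₀ hp0, Nat.cast_sub hi, add_sub_assoc]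

lemma zpow_ne_one_of_not_isOfFinOrder (hp : ¬IsOfFinOrder p) {z : ℤ} (hz : z ≠ 0) :
    p ^ z ≠ 1 := by
  have hpow (n : ℕ) (hn : n ≠ 0) : p ^ n ≠ 1 := fun h =>
    hp (isOfFinOrder_iff_pow_eq_one.mpr ⟨n, Nat.pos_of_ne_zero hn, h⟩)
  obtain ⟨n, rfl | rfl⟩ := z.eq_nat_or_neg
  · exact_mod_cast hpow n (by simpa using hz)
  · simpa using hpow n (by simpa using hz)

lemma qp_zpow_ne_zero (hp0 : p ≠ 0) (hp : ¬IsOfFinOrder p) {a : ℤ} {n : ℕ}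
    (h : 0 < a ∨ a + n ≤ 0) : qp (p ^ a) p n ≠ 0 := by
  refine Finset.prod_ne_zero_iff.mpr fun j hj => ?_
  have hj : j < n := Finset.mem_range.mp hj
  rw [← zpow_natCast, ← zpow_add₀ hp0]
  exact sub_ne_zero.mpr (zpow_ne_one_of_not_isOfFinOrder hp (by lia)).symm

lemma qp_zpow_eq_zero (hp0 : p ≠ 0) {a : ℤ} {n : ℕ} (ha : a ≤ 0) (hn : 0 < a + n) :
    qp (p ^ a) p n = 0 := by
  refine Finset.prod_eq_zero (i := a.natAbs) (Finset.mem_range.mpr (by lia)) ?_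
  rw [← zpow_natCast, ← zpow_add₀ hp0, Int.ofNat_natAbs_of_nonpos ha]
  simp

lemma qp_self_ne_zero (hp : ¬IsOfFinOrder p) (n : ℕ) : qp p p n ≠ 0 := by
  refine Finset.prod_ne_zero_iff.mpr fun j _ => sub_ne_zero.mpr fun h => hp ?_
  exact isOfFinOrder_iff_pow_eq_one.mpr ⟨j + 1, j.succ_pos, by rw [pow_succ', ← h]⟩

lemma qp_inv_mul_pow {a : ℂ} (hp0 : p ≠ 0) (ha : a ≠ 0) (n : ℕ) :
    qp a⁻¹ p n * a ^ n =
      (-1) ^ n * p ^ n.choose 2 * qp (a * p ^ (1 - (n : ℤ))) p n := by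
  induction n with
  | zero => simp
  | succ n ih =>
    have hshift : a * p ^ (1 - ((n + 1 : ℕ) : ℤ)) * p = a * p ^ (1 - (n : ℤ)) := by
      rw [mul_assoc, ← zpow_add_one₀ hp0]
      congr 2
      push_cast
      ring
    have hfactor : (1 - a⁻¹ * p ^ n) * a = -(p ^ n * (1 - a * p ^ (1 - ((n + 1 : ℕ) : ℤ)))) := by
      rw [show (1 - ((n + 1 : ℕ) : ℤ)) = -(n : ℤ) by push_cast; ring, _root_.zpow_neg, zpow_natCast]
      field_simp
      ring
    rw [qp_succ, qp_succ', hshift, Nat.choose_succ_succ' n 1, Nat.choose_one_right]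
    linear_combination (1 - a⁻¹ * p ^ n) * a * ih +
      (-1) ^ n * p ^ n.choose 2 * qp (a * p ^ (1 - (n : ℤ))) p n * hfactor

lemma qp_inv_mul_pow_mul_comm {x y : ℂ} (hp0 : p ≠ 0) (hx : x ≠ 0) (hy : y ≠ 0) (n : ℕ) :
    qp x⁻¹ p n * x ^ n * qp (y * p ^ (1 - (n : ℤ))) p n =
      qp y⁻¹ p n * y ^ n * qp (x * p ^ (1 - (n : ℤ))) p n := by
  rw [qp_inv_mul_pow hp0 hx, qp_inv_mul_pow hp0 hy]
  ring

lemma qp_shift_mul_qp_inv {x : ℂ} (hp0 : p ≠ 0) (hx : x ≠ 0) (k r : ℕ) :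
    qp (x * p ^ (1 - (r : ℤ))) p k * qp (x * p ^ k)⁻¹ p r * (p ^ k) ^ r =
      qp (x * p) p k * qp x⁻¹ p r := by
  have hsplit : qp (x * p ^ (1 - (r : ℤ))) p k * qp (x * p ^ k * p ^ (1 - (r : ℤ))) p r =
      qp (x * p ^ (1 - (r : ℤ))) p r * qp (x * p) p k := by
    have h := qp_add (x * p ^ (1 - (r : ℤ))) p r k
    rw [mul_assoc x _ (p ^ r), ← zpow_natCast p r, ← zpow_add₀ hp0, sub_add_cancel, zpow_one] at h
    rw [mul_right_comm x (p ^ k), ← qp_add, add_comm k r, h]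
  have hk := qp_inv_mul_pow hp0 (mul_ne_zero hx (pow_ne_zero k hp0)) r
  have h0 := qp_inv_mul_pow hp0 hx r
  rw [mul_pow] at hk
  refine mul_right_cancel₀ (pow_ne_zero r hx) ?_
  linear_combination qp (x * p ^ (1 - (r : ℤ))) p k * hk - qp (x * p) p k * h0 +
    (-1) ^ r * p ^ r.choose 2 * hsplit

end QPochhammer

/-- The Gaussian binomial coefficient `(p;p)_n / ((p;p)_j (p;p)_{n-j})`. Since `n - j` is truncated
subtraction, it is only meaningful for `j ≤ n`. -/
def qBinom (p : ℂ) (n j : ℕ) : ℂ := qp p p n / (qp p p j * qp p p (n - j))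

/-- The `j`-th summand of the `q`-Saalschütz sum of order `n`, cleared of denominators. -/
def saalTerm (p a b e : ℂ) (n j : ℕ) : ℂ :=
  qBinom p n j * qp a p j * qp b p j * qp (a * b * e * p ^ j) p (n - j) * qp e p (n - j) * e ^ j

/-- The telescoping certificate of `saalTerm` as a function of the order `n`. -/
def saalCert (p a b e : ℂ) (n : ℕ) : ℕ → ℂ
  | 0 => 0
  | j + 1 => -(e * p ^ (n - j) * (1 - a * p ^ j) * (1 - b * p ^ j) * saalTerm p a b e n j)

section Saalschutz

variable {p : ℂ}

lemma qBinom_self (hp : ¬IsOfFinOrder p) (n : ℕ) : qBinom p n n = 1 := by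
  simp [qBinom, qp_self_ne_zero hp]

lemma one_sub_mul_pow_ne_zero (hp : ¬IsOfFinOrder p) (n : ℕ) : 1 - p * p ^ n ≠ 0 :=
  right_ne_zero_of_mul (qp_succ p p n ▸ qp_self_ne_zero hp (n + 1))

lemma qBinom_mul_qBinom_add (hp : ¬IsOfFinOrder p) (k i l : ℕ) :
    qBinom p k (i + l) * qBinom p (i + l) i = qBinom p k i * qBinom p (k - i) l := by
  have h := qp_self_ne_zero hp
  simp only [qBinom, Nat.sub_sub, Nat.add_sub_cancel_left]
  field_simp [h]

lemma saalTerm_succ (hp : ¬IsOfFinOrder p) (a b e : ℂ) {n j : ℕ} (hj : j ≤ n) :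
    saalTerm p a b e (n + 1) j =
      (1 - b * e * p ^ n) * (1 - a * e * p ^ n) * saalTerm p a b e n j +
        (saalCert p a b e n (j + 1) - saalCert p a b e n j) := by
  obtain ⟨l, rfl⟩ := Nat.exists_eq_add_of_le hj
  have hqp := qp_self_ne_zero hp
  have hfactor := one_sub_mul_pow_ne_zero hp
  cases j with
  | zero =>
    have := hfactor l
    simp only [saalTerm, saalCert, qBinom, zero_add, qp_zero, pow_zero, qp_succ, Nat.sub_zero]
    field_simp [hqp]
    ring
  | succ j =>
    have h₁ : j + l + 1 + 1 - (j + 1) = l + 1 := by lia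
    have h₂ : j + l + 1 - (j + 1) = l := by lia
    have h₃ : j + l + 1 - j = l + 1 := by lia
    have := hfactor j
    have := hfactor l
    have := hfactor (j + l)
    simp only [saalTerm, saalCert, qBinom, add_right_comm j 1 l, h₁, h₂, h₃]
    rw [qp_succ' (a * b * e * p ^ j), show a * b * e * p ^ j * p = a * b * e * p ^ (j + 1) by ring]
    simp only [qp_succ]
    field_simp [hqp]
    ring

theorem sum_saalTerm (hp : ¬IsOfFinOrder p) (a b e : ℂ) (n : ℕ) :
    ∑ j ∈ range (n + 1), saalTerm p a b e n j = qp (b * e) p n * qp (a * e) p n := by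
  induction n with
  | zero => simp [saalTerm, qBinom_self hp]
  | succ n ih =>
    have hlast : saalTerm p a b e (n + 1) (n + 1) + saalCert p a b e n (n + 1) = 0 := by
      simp only [saalCert, saalTerm, qBinom_self hp, Nat.sub_self, qp_succ, qp_zero]
      ring
    rw [Finset.sum_range_succ, Finset.sum_congr rfl fun j hj =>
      saalTerm_succ hp a b e (Nat.lt_succ_iff.mp (Finset.mem_range.mp hj))]
    rw [Finset.sum_add_distrib, ← Finset.mul_sum, ih, Finset.sum_range_sub, qp_succ, qp_succ]
    have hfirst : saalCert p a b e n 0 = 0 := rfl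
    linear_combination hlast - hfirst

end Saalschutz

section Sears

variable {p : ℂ}

lemma sears_summand (hp : ¬IsOfFinOrder p) (α β b x w : ℂ) {k i l : ℕ} (h : i + l ≤ k) :
    qBinom p k (i + l) * saalTerm p α β x (i + l) i * qp b p (i + l) * qp w p (k - (i + l)) *
        w ^ (i + l) * qp (b * x * w * p ^ (i + l)) p (k - (i + l)) *
        qp (α * β * x * p ^ (i + l)) p (k - (i + l)) =
      qBinom p k i * qp α p i * qp β p i * qp b p i * qp (α * β * x * p ^ i) p (k - i) *
        (x * w) ^ i * saalTerm p (b * p ^ i) x w (k - i) l := by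
  have hαβx : qp (α * β * x * p ^ i) p (k - i) =
      qp (α * β * x * p ^ i) p l * qp (α * β * x * p ^ (i + l)) p (k - (i + l)) := by
    rw [qp_eq_mul_of_le _ _ (show l ≤ k - i by lia), mul_assoc (α * β * x), ← pow_add, Nat.sub_sub]
  rw [hαβx, saalTerm, saalTerm, qp_add b, Nat.add_sub_cancel_left, Nat.sub_sub,
    show b * p ^ i * x * w * p ^ l = b * x * w * p ^ (i + l) by ring]
  linear_combination qp α p i * qp β p i * qp b p i * qp (b * p ^ i) p l * qp x p l * (x * w) ^ i *
    w ^ l * qp (α * β * x * p ^ i) p l * qp w p (k - (i + l)) *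
    qp (b * x * w * p ^ (i + l)) p (k - (i + l)) *
    qp (α * β * x * p ^ (i + l)) p (k - (i + l)) * qBinom_mul_qBinom_add hp k i l

theorem sears_transformation (hp : ¬IsOfFinOrder p) (α β b x w : ℂ) (k : ℕ) :
    ∑ j ∈ range (k + 1),
        qBinom p k j * (qp (β * x) p j * qp (α * x) p j) * qp b p j * qp w p (k - j) * w ^ j *
          qp (b * x * w * p ^ j) p (k - j) * qp (α * β * x * p ^ j) p (k - j) =
      ∑ i ∈ range (k + 1),
        qBinom p k i * qp α p i * qp β p i * qp b p i * qp (α * β * x * p ^ i) p (k - i) *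
          (x * w) ^ i * (qp (x * w) p (k - i) * qp (b * p ^ i * w) p (k - i)) := by
  simp_rw [← sum_saalTerm hp, Finset.mul_sum, Finset.sum_mul]
  set f : ℕ → ℕ → ℂ := fun i l =>
    qBinom p k i * qp α p i * qp β p i * qp b p i * qp (α * β * x * p ^ i) p (k - i) *
      (x * w) ^ i * saalTerm p (b * p ^ i) x w (k - i) l
  calc _ = ∑ j ∈ range (k + 1), ∑ i ∈ range (j + 1), f i (j - i) := by
        refine Finset.sum_congr rfl fun j hj => Finset.sum_congr rfl fun i hi => ?_
        rw [Finset.mem_range] at hi hj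
        simpa only [Nat.add_sub_cancel' (Nat.lt_succ_iff.mp hi)] using
          sears_summand hp α β b x w (i := i) (l := j - i) (k := k) (by lia)
    _ = ∑ i ∈ range (k + 1), ∑ l ∈ range (k + 1 - i), f i l :=
        Finset.sum_range_diag_flip (k + 1) f
    _ = _ := by
        refine Finset.sum_congr rfl fun i hi => ?_
        rw [Nat.sub_add_comm (Nat.lt_succ_iff.mp (Finset.mem_range.mp hi))]

end Sears

/-- The continuous q-ultraspherical polynomial of degree `M` as a polynomial in `u = z²`: its value
there is `z ^ M` times the Laurent polynomial `Chat p β M z`. -/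
def ultraPoly (p β : ℂ) (M : ℕ) : ℂ[X] :=
  ∑ r ∈ range (M + 1),
    Polynomial.C (qp β p r * qp β p (M - r) / (qp p p r * qp p p (M - r))) * X ^ r

/-- The ratio `(p^{s+1};p)_k / (p;p)_k`. It extends `(p^{k+1};p)_s / (p;p)_s` to negative `s`, which
removes the boundary cases from sums of coefficients of `ultraPoly p (p ^ (k + 1))`. -/
def ultraCoeff (p : ℂ) (k : ℕ) (s : ℤ) : ℂ := qp (p ^ (s + 1)) p k / qp p p k

/-- The polynomial `(cX;p)_n`. -/
def qpPoly (c p : ℂ) (n : ℕ) : ℂ[X] := ∏ j ∈ range n, (1 - Polynomial.C (c * p ^ j) * X)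

section UltraPoly

variable {p : ℂ}

lemma ultraPoly_eval_sq (p β : ℂ) (M : ℕ) {z : ℂ} (hz : z ≠ 0) :
    (ultraPoly p β M).eval (z ^ 2) = z ^ M * Chat p β M z := by
  have hpow (r : ℕ) : (z ^ 2) ^ r = z ^ M * z ^ ((M : ℤ) - 2 * ((M - r : ℤ))) := by
    rw [← zpow_natCast z M, ← zpow_add₀ hz, ← pow_mul, ← zpow_natCast]
    congr 1
    push_cast
    ring
  rw [ultraPoly, Chat, Polynomial.eval_finsetSum, ← Finset.sum_range_reflect, Finset.mul_sum]
  refine Finset.sum_congr rfl fun r hr => ?_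
  have hr : r ≤ M := Nat.lt_succ_iff.mp (Finset.mem_range.mp hr)
  simp only [Polynomial.eval_mul, Polynomial.eval_C, Polynomial.eval_pow, Polynomial.eval_X, hpow,
    Nat.add_sub_cancel, Nat.sub_sub_self hr, Nat.cast_sub hr, sub_sub_cancel]
  ring

lemma ultraCoeff_natCast (hp : ¬IsOfFinOrder p) (k r : ℕ) :
    ultraCoeff p k r = qp (p ^ (k + 1)) p r / qp p p r := by
  rw [ultraCoeff, div_eq_div_iff (qp_self_ne_zero hp k) (qp_self_ne_zero hp r)]
  have h := (qp_add p p r k).symm.trans (add_comm r k ▸ qp_add p p k r)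
  rw [← pow_succ', ← pow_succ'] at h
  rw [show ((r : ℤ) + 1) = ((r + 1 : ℕ) : ℤ) by push_cast; rfl, zpow_natCast]
  linear_combination h

lemma ultraCoeff_eq_zero (hp0 : p ≠ 0) {k : ℕ} {s : ℤ} (hs : s < 0) (hk : -k ≤ s) :
    ultraCoeff p k s = 0 := by
  rw [ultraCoeff, qp_zpow_eq_zero hp0 (by lia) (by lia), zero_div]

lemma ultraCoeff_sub_mul_qp (hp0 : p ≠ 0) (k r : ℕ) (n : ℤ) :
    ultraCoeff p k (n - k - r) * qp (p ^ (-n)) p r * (p ^ k) ^ r =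
      ultraCoeff p k (n - k) * qp (p ^ (k - n)) p r := by
  have h := qp_shift_mul_qp_inv hp0 (zpow_ne_zero (n - k) hp0) k r
  rw [← zpow_natCast p k, ← zpow_add₀ hp0, ← zpow_add₀ hp0, ← _root_.zpow_neg, ← _root_.zpow_neg,
    sub_add_cancel, neg_sub, ← zpow_add_one₀ hp0] at h
  rw [ultraCoeff, ultraCoeff, show n - k - r + 1 = n - k + (1 - r) by ring]
  rw [← zpow_natCast p k]
  linear_combination (qp p p k)⁻¹ * h

lemma coeff_ultraPoly_of_le (p β : ℂ) {M r : ℕ} (h : r ≤ M) :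
    (ultraPoly p β M).coeff r = qp β p r * qp β p (M - r) / (qp p p r * qp p p (M - r)) := by
  simp [ultraPoly, h]

lemma coeff_ultraPoly_of_lt (p β : ℂ) {M r : ℕ} (h : M < r) : (ultraPoly p β M).coeff r = 0 := by
  simp [ultraPoly, h]

lemma coeff_ultraPoly (hp0 : p ≠ 0) (hp : ¬IsOfFinOrder p) {k n r : ℕ} (hk : k ≤ n) (hr : r ≤ n) :
    (ultraPoly p (p ^ (k + 1)) (n - k)).coeff r =
      ultraCoeff p k r * ultraCoeff p k (n - k - r) := by
  rcases le_or_gt r (n - k) with h | h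
  · rw [coeff_ultraPoly_of_le _ _ h, ← Nat.cast_sub hk, ← Nat.cast_sub h, ultraCoeff_natCast hp,
      ultraCoeff_natCast hp, div_mul_div_comm]
  · rw [coeff_ultraPoly_of_lt _ _ h, ultraCoeff_eq_zero hp0 (s := n - k - r) (by lia) (by lia),
      mul_zero]

lemma coeff_qpPoly (hp0 : p ≠ 0) (hp : ¬IsOfFinOrder p) (c : ℂ) (n i : ℕ) :
    (qpPoly c p n).coeff i = qp (p ^ (-(n : ℤ))) p i / qp p p i * (c * p ^ n) ^ i := by
  induction n generalizing i with
  | zero =>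
    cases i with
    | zero => simp [qpPoly]
    | succ i => simp [qpPoly, qp_succ', Polynomial.coeff_one]
  | succ n ih =>
    rw [qpPoly, Finset.prod_range_succ, ← qpPoly, mul_sub, mul_one, mul_left_comm,
      Polynomial.coeff_sub, Polynomial.coeff_C_mul]
    cases i with
    | zero => simp [ih]
    | succ i =>
      have := qp_self_ne_zero hp i
      have hne := one_sub_mul_pow_ne_zero hp i
      rw [Polynomial.coeff_mul_X, ih, ih, qp_succ, qp_succ' (p ^ _), qp_succ p,
        show p ^ (-((n + 1 : ℕ) : ℤ)) * p = p ^ (-(n : ℤ)) by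
          rw [← zpow_add_one₀ hp0]; congr 1; push_cast; ring,
        _root_.zpow_neg, _root_.zpow_neg, zpow_natCast, zpow_natCast]
      generalize hd : 1 - p * p ^ i = d at hne ⊢
      field_simp
      rw [← hd]
      ring

lemma coeff_ultraPoly_mul_coeff_qpPoly (hp0 : p ≠ 0) (hp : ¬IsOfFinOrder p) {k n j r : ℕ}
    (hk : k ≤ n) (hj : j ≤ n) (hr : r ≤ j) :
    (ultraPoly p (p ^ (k + 1)) (n - k)).coeff r *
        (qpPoly (p ^ (-(k : ℤ))) p (2 * k + 1)).coeff (j - r) =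
      ultraCoeff p k (n - k) * (p ^ (k + 1)) ^ j / (qp p p j * qp (p ^ (-(n : ℤ))) p j) *
        saalTerm p (p ^ (k + 1)) (p ^ ((k : ℤ) - n)) (p ^ (-((2 * k + 1 : ℕ) : ℤ))) j r := by
  set a := p ^ (k + 1)
  set e := p ^ (-((2 * k + 1 : ℕ) : ℤ))
  have hc : p ^ (-(k : ℤ)) * p ^ (2 * k + 1) = a := by
    simp only [a, ← zpow_natCast, ← zpow_add₀ hp0]
    congr 1; push_cast; ring
  have habe : a * p ^ ((k : ℤ) - n) * e = p ^ (-(n : ℤ)) := by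
    simp only [a, e, ← zpow_natCast p (k + 1), ← zpow_add₀ hp0]
    congr 1; push_cast; ring
  have hae : a * e * p ^ k = 1 := by
    simp only [a, e, ← zpow_natCast, ← zpow_add₀ hp0, ← zpow_zero p]
    congr 1; push_cast; ring
  have hpow : a ^ (j - r) = a ^ j * e ^ r * (p ^ k) ^ r := by
    rw [← Nat.sub_add_cancel hr, pow_add, Nat.sub_add_cancel hr]
    linear_combination -a ^ (j - r) * congrArg (· ^ r) hae
  have hne : qp (p ^ (-(n : ℤ))) p r * qp (p ^ (-(n : ℤ)) * p ^ r) p (j - r) ≠ 0 :=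
    qp_eq_mul_of_le (p ^ (-(n : ℤ))) p hr ▸ qp_zpow_ne_zero hp0 hp (Or.inr (by lia))
  have := left_ne_zero_of_mul hne
  have := right_ne_zero_of_mul hne
  rw [coeff_ultraPoly hp0 hp hk (hr.trans hj), coeff_qpPoly hp0 hp, hc, ultraCoeff_natCast hp,
    saalTerm, qBinom, habe, qp_eq_mul_of_le (p ^ (-(n : ℤ))) p hr, hpow]
  field_simp [qp_self_ne_zero hp]
  linear_combination qp a p r * qp e p (j - r) * a ^ j * e ^ r * ultraCoeff_sub_mul_qp hp0 k r n

theorem coeff_ultraPoly_mul_qpPoly (hp0 : p ≠ 0) (hp : ¬IsOfFinOrder p) {k n j : ℕ} (hk : k ≤ n)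
    (hj : j ≤ n) :
    (ultraPoly p (p ^ (k + 1)) (n - k) * qpPoly (p ^ (-(k : ℤ))) p (2 * k + 1)).coeff j =
      ultraCoeff p k (n - k) *
        (qp (p ^ (-(k : ℤ))) p j * qp (p ^ (-(n + k + 1 : ℤ))) p j /
          (qp p p j * qp (p ^ (-(n : ℤ))) p j)) * (p ^ (k + 1)) ^ j := by
  have hae : p ^ (k + 1) * p ^ (-((2 * k + 1 : ℕ) : ℤ)) = p ^ (-(k : ℤ)) := by
    rw [← zpow_natCast, ← zpow_add₀ hp0]
    congr 1; push_cast; ring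
  have hbe : p ^ ((k : ℤ) - n) * p ^ (-((2 * k + 1 : ℕ) : ℤ)) = p ^ (-(n + k + 1 : ℤ)) := by
    rw [← zpow_add₀ hp0]
    congr 1; push_cast; ring
  rw [Polynomial.coeff_mul, Finset.Nat.sum_antidiagonal_eq_sum_range_succ (fun r i =>
      (ultraPoly p (p ^ (k + 1)) (n - k)).coeff r * (qpPoly _ p (2 * k + 1)).coeff i),
    Finset.sum_congr rfl fun r hr => coeff_ultraPoly_mul_coeff_qpPoly hp0 hp hk hj
      (Nat.lt_succ_iff.mp (Finset.mem_range.mp hr)),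
    ← Finset.mul_sum, sum_saalTerm hp, hae, hbe]
  ring

end UltraPoly

section Racah

variable {p : ℂ}

lemma qBinom_mul_qp_zpow (hp0 : p ≠ 0) (hp : ¬IsOfFinOrder p) {k i : ℕ} (hi : i ≤ k) (s : ℤ) :
    qBinom p k i * qp (p ^ (-s)) p i * (p ^ s) ^ i =
      qp (p ^ (-(k : ℤ))) p i / qp p p i * (p ^ k) ^ i * qp (p ^ (s + 1 - i)) p i := by
  have hsplit : qp p p k = qp p p (k - i) * qp (p ^ (k + 1 - i : ℤ)) p i := by
    simpa only [zpow_one, add_comm (1 : ℤ)] using qp_zpow_split hp0 hi 1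
  have h := qp_inv_mul_pow_mul_comm hp0 (zpow_ne_zero s hp0) (pow_ne_zero k hp0) i
  rw [← zpow_natCast p k, ← _root_.zpow_neg, ← _root_.zpow_neg, ← zpow_add₀ hp0, ← zpow_add₀ hp0,
    ← add_sub_assoc, ← add_sub_assoc] at h
  rw [qBinom, hsplit, ← zpow_natCast p k]
  linear_combination (qp p p i)⁻¹ * h +
    qp (p ^ (k + 1 - i : ℤ)) p i * (qp p p i)⁻¹ * qp (p ^ (-s)) p i * (p ^ s) ^ i *
      mul_inv_cancel₀ (qp_self_ne_zero hp (k - i))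

lemma qBinom_mul_zpow_pow (hp0 : p ≠ 0) (hp : ¬IsOfFinOrder p) {k m j : ℕ} (hkm : k ≤ m)
    (hj : j ≤ k) :
    qBinom p k j * (p ^ (m - k + 1 : ℤ)) ^ j =
      qp (p ^ (-(k : ℤ))) p j / (qp p p j * qp (p ^ (-(m : ℤ))) p j) * p ^ j *
        qp (p ^ (m + 1 - j : ℤ)) p j := by
  have hm : qp (p ^ (-(m : ℤ))) p j ≠ 0 := qp_zpow_ne_zero hp0 hp (Or.inr (by lia))
  have hpow : (p ^ (m - k + 1 : ℤ)) ^ j * (p ^ k) ^ j = (p ^ (m : ℤ)) ^ j * p ^ j := by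
    rw [← mul_pow, ← mul_pow, ← zpow_natCast p k, ← zpow_add₀ hp0, ← zpow_add_one₀ hp0]
    congr 2; ring
  refine mul_right_cancel₀ (mul_ne_zero hm (pow_ne_zero j (pow_ne_zero k hp0))) ?_
  linear_combination p ^ j * qBinom_mul_qp_zpow hp0 hp hj (m : ℤ) +
    qBinom p k j * qp (p ^ (-(m : ℤ))) p j * hpow -
    qp (p ^ (-(k : ℤ))) p j * (qp p p j)⁻¹ * (p ^ k) ^ j * p ^ j *
      qp (p ^ (m + 1 - j : ℤ)) p j * mul_inv_cancel₀ hm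

lemma sears_left_summand (hp0 : p ≠ 0) (hp : ¬IsOfFinOrder p) {k m n j : ℕ} (hkm : k ≤ m)
    (hkn : k ≤ n) (hj : j ≤ k) :
    qBinom p k j * qp (p ^ (m - k + 1 : ℤ)) p (k - j) * (p ^ (m - k + 1 : ℤ)) ^ j *
        qp (p * p ^ j) p (k - j) * qp (p ^ (-(n : ℤ)) * p ^ j) p (k - j) =
      qp p p k ^ 2 * qp (p ^ (-(n : ℤ))) p k * ultraCoeff p k (m - k) *
        (qp (p ^ (-(k : ℤ))) p j /
          (qp p p j * qp (p ^ (-(n : ℤ))) p j * qp (p ^ (-(m : ℤ))) p j * qp p p j) * p ^ j) := by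
  have hn : qp (p ^ (-(n : ℤ))) p j ≠ 0 := qp_zpow_ne_zero hp0 hp (Or.inr (by lia))
  have hsplit := qp_zpow_split hp0 hj (m - k + 1 : ℤ)
  rw [show (m - k + 1 + k - j : ℤ) = m + 1 - j by ring] at hsplit
  have hpj := qp_self_ne_zero hp j
  have hself := qp_eq_mul_of_le p p hj
  rw [ultraCoeff, hsplit, qp_eq_mul_of_le (p ^ (-(n : ℤ))) p hj]
  calc _ = qBinom p k j * (p ^ (m - k + 1 : ℤ)) ^ j * qp (p ^ (m - k + 1 : ℤ)) p (k - j) *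
          qp (p * p ^ j) p (k - j) * qp (p ^ (-(n : ℤ)) * p ^ j) p (k - j) := by ring
    _ = _ := by
        rw [qBinom_mul_zpow_pow hp0 hp hkm hj]
        field_simp
        rw [hself, mul_comm p]
        ring

lemma sears_right_summand (hp0 : p ≠ 0) (hp : ¬IsOfFinOrder p) {k m n i : ℕ} (hkn : k ≤ n)
    (hi : i ≤ k) (t : ℤ) :
    qBinom p k i * qp (p ^ (m + 1 - t)) p i * qp (p ^ (-t)) p i *
        qp (p ^ (-(n : ℤ)) * p ^ i) p (k - i) * (p ^ (t + 1)) ^ i *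
          (qp (p ^ (t + 1)) p (k - i) * qp (p ^ (m - k - t + i + 1 : ℤ)) p (k - i)) =
      qp p p k ^ 2 * qp (p ^ (-(n : ℤ))) p k *
        (qp (p ^ (-(k : ℤ))) p i / (qp p p i * qp (p ^ (-(n : ℤ))) p i) * (p ^ (k + 1)) ^ i *
          (ultraCoeff p k (t - i) * ultraCoeff p k (m - k - (t - i)))) := by
  have hn : qp (p ^ (-(n : ℤ))) p i ≠ 0 := qp_zpow_ne_zero hp0 hp (Or.inr (by lia))
  have hpi := qp_self_ne_zero hp i
  have hpk := qp_self_ne_zero hp k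
  have hsplit₁ : qp (p ^ (t - i + 1)) p k =
      qp (p ^ (t + 1 - i)) p i * qp (p ^ (t + 1)) p (k - i) := by
    rw [qp_eq_mul_of_le _ p hi, ← zpow_natCast p i, ← zpow_add₀ hp0]
    congr 3 <;> ring
  have hsplit₂ : qp (p ^ (m - k - (t - i) + 1)) p k =
      qp (p ^ (m - k - t + i + 1 : ℤ)) p (k - i) * qp (p ^ (m + 1 - t)) p i := by
    rw [qp_zpow_split hp0 hi]
    congr 3 <;> ring
  rw [ultraCoeff, ultraCoeff, hsplit₁, hsplit₂, qp_eq_mul_of_le (p ^ (-(n : ℤ))) p hi]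
  calc _ = qBinom p k i * qp (p ^ (-t)) p i * (p ^ t) ^ i * p ^ i * qp (p ^ (m + 1 - t)) p i *
          qp (p ^ (-(n : ℤ)) * p ^ i) p (k - i) *
          (qp (p ^ (t + 1)) p (k - i) * qp (p ^ (m - k - t + i + 1 : ℤ)) p (k - i)) := by
        rw [zpow_add_one₀ hp0]
        ring
    _ = _ := by
        rw [qBinom_mul_qp_zpow hp0 hp hi, pow_succ p k, mul_pow]
        field_simp

lemma qRacah_eq_sum_range (hp0 : p ≠ 0) (k m n t : ℕ) :
    qRacah p 1 1 (p ^ (-(m + 1 : ℤ))) (p ^ (-(n + 1 : ℤ))) k t =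
      ∑ j ∈ range (k + 1),
        qp (p ^ (-(k : ℤ))) p j * qp (p ^ (k + 1)) p j * qp (p ^ (-(t : ℤ))) p j *
            qp (p ^ (t - m - n - 1 : ℤ)) p j /
          (qp p p j * qp (p ^ (-(n : ℤ))) p j * qp (p ^ (-(m : ℤ))) p j * qp p p j) * p ^ j := by
  have hshift (l : ℕ) : p ^ (-(l + 1 : ℤ)) * p = p ^ (-(l : ℤ)) := by
    rw [← zpow_add_one₀ hp0]
    congr 1; ring
  have hγδ : p ^ (-(m + 1 : ℤ)) * p ^ (-(n + 1 : ℤ)) * p ^ (t + 1) = p ^ (t - m - n - 1 : ℤ) := by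
    rw [← zpow_natCast p (t + 1), ← zpow_add₀ hp0, ← zpow_add₀ hp0]
    congr 1; push_cast; ring
  simp only [qRacah, one_mul, hshift, hγδ]
  refine Finset.sum_subset (Finset.range_subset_range.mpr (by lia)) fun j hj hj' => ?_
  rw [Finset.mem_range] at hj hj'
  rw [qp_zpow_eq_zero hp0 (a := -(t : ℤ)) (by lia) (by lia)]
  ring

theorem sum_ultraCoeff_mul_eq_qRacah (hp0 : p ≠ 0) (hp : ¬IsOfFinOrder p) {k m n : ℕ}
    (hkm : k ≤ m) (hkn : k ≤ n) (t : ℕ) :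
    ∑ i ∈ range (k + 1),
        qp (p ^ (-(k : ℤ))) p i * qp (p ^ (-(n + k + 1 : ℤ))) p i /
          (qp p p i * qp (p ^ (-(n : ℤ))) p i) * (p ^ (k + 1)) ^ i *
        (ultraCoeff p k (t - i) * ultraCoeff p k (m - k - (t - i))) =
      ultraCoeff p k (m - k) *
        qRacah p 1 1 (p ^ (-(m + 1 : ℤ))) (p ^ (-(n + 1 : ℤ))) k t := by
  have hadd {a b c : ℤ} (h : a + b = c) : p ^ a * p ^ b = p ^ c := by rw [← zpow_add₀ hp0, h]
  have hsears := sears_transformation hp (p ^ (-(n + k + 1 : ℤ))) (p ^ (m + 1 - t : ℤ))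
    (p ^ (-(t : ℤ))) (p ^ (k + t - m : ℤ)) (p ^ (m - k + 1 : ℤ)) k
  rw [hadd (show (m + 1 - t : ℤ) + (k + t - m) = (k + 1 : ℕ) by push_cast; ring), zpow_natCast,
    hadd (show -(n + k + 1 : ℤ) + (k + t - m) = t - m - n - 1 by ring),
    hadd (show -(t : ℤ) + (k + t - m) = k - m by ring),
    hadd (show (k - m : ℤ) + (m - k + 1) = 1 by ring), zpow_one,
    hadd (show -(n + k + 1 : ℤ) + (m + 1 - t) = m - n - k - t by ring),
    hadd (show (m - n - k - t : ℤ) + (k + t - m) = -n by ring),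
    hadd (show (k + t - m : ℤ) + (m - k + 1) = t + 1 by ring)] at hsears
  have hbw (i : ℕ) : p ^ (-(t : ℤ)) * p ^ i * p ^ (m - k + 1 : ℤ) =
      p ^ (m - k - t + i + 1 : ℤ) := by
    rw [← zpow_natCast p i, hadd rfl, hadd rfl]
    congr 1; ring
  have hpk := qp_self_ne_zero hp k
  have hnk : qp (p ^ (-(n : ℤ))) p k ≠ 0 := qp_zpow_ne_zero hp0 hp (Or.inr (by lia))
  refine mul_left_cancel₀ (mul_ne_zero (pow_ne_zero 2 hpk) hnk) ?_
  rw [qRacah_eq_sum_range hp0, Finset.mul_sum, Finset.mul_sum, Finset.mul_sum]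
  convert hsears.symm using 1
  · refine Finset.sum_congr rfl fun i hi => ?_
    have hi : i ≤ k := Nat.lt_succ_iff.mp (Finset.mem_range.mp hi)
    rw [hbw]
    linear_combination -qp (p ^ (-(n + k + 1 : ℤ))) p i * sears_right_summand hp0 hp hkn hi t
  · refine Finset.sum_congr rfl fun j hj => ?_
    have hj : j ≤ k := Nat.lt_succ_iff.mp (Finset.mem_range.mp hj)
    linear_combination -qp (p ^ (k + 1)) p j * qp (p ^ (t - m - n - 1 : ℤ)) p j *
      qp (p ^ (-(t : ℤ))) p j * sears_left_summand hp0 hp hkm hkn hj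

end Racah

section TripleProduct

variable {p : ℂ}

lemma coeff_ultraPoly_mul_qpPoly_eq_zero (hp0 : p ≠ 0) (hp : ¬IsOfFinOrder p) {k n i : ℕ}
    (hkn : k ≤ n) (hki : k < i) (hi : i ≤ n) :
    (ultraPoly p (p ^ (k + 1)) (n - k) * qpPoly (p ^ (-(k : ℤ))) p (2 * k + 1)).coeff i = 0 := by
  rw [coeff_ultraPoly_mul_qpPoly hp0 hp hkn hi,
    qp_zpow_eq_zero hp0 (a := -(k : ℤ)) (by lia) (by lia)]
  ring

theorem coeff_ultraPoly_mul_qpPoly_mul_ultraPoly_eq_zero (hp0 : p ≠ 0) (hp : ¬IsOfFinOrder p)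
    {k m n t : ℕ} (hkm : k ≤ m) (hkn : k ≤ n) (hmt : m < t) (htn : t ≤ n) :
    (ultraPoly p (p ^ (k + 1)) (n - k) * qpPoly (p ^ (-(k : ℤ))) p (2 * k + 1) *
      ultraPoly p (p ^ (k + 1)) (m - k)).coeff t = 0 := by
  rw [Polynomial.coeff_mul]
  refine Finset.sum_eq_zero fun ij hij => ?_
  have hij : ij.1 + ij.2 = t := Finset.HasAntidiagonal.mem_antidiagonal.mp hij
  rcases le_or_gt ij.1 k with hi | hi
  · rw [coeff_ultraPoly_of_lt (M := m - k) _ _ (by lia), mul_zero]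
  · rw [coeff_ultraPoly_mul_qpPoly_eq_zero hp0 hp hkn hi (by lia), zero_mul]

theorem coeff_ultraPoly_mul_qpPoly_mul_ultraPoly (hp0 : p ≠ 0) (hp : ¬IsOfFinOrder p)
    {k m n t : ℕ} (hkm : k ≤ m) (hkn : k ≤ n) (htm : t ≤ m) (htn : t ≤ n) :
    (ultraPoly p (p ^ (k + 1)) (n - k) * qpPoly (p ^ (-(k : ℤ))) p (2 * k + 1) *
      ultraPoly p (p ^ (k + 1)) (m - k)).coeff t =
      ultraCoeff p k (m - k) * ultraCoeff p k (n - k) *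
        qRacah p 1 1 (p ^ (-(m + 1 : ℤ))) (p ^ (-(n + 1 : ℤ))) k t := by
  rw [mul_right_comm (ultraCoeff p k (m - k)),
    ← sum_ultraCoeff_mul_eq_qRacah hp0 hp hkm hkn, Finset.sum_mul,
    Polynomial.coeff_mul, Finset.Nat.sum_antidiagonal_eq_sum_range_succ (fun i j =>
      (ultraPoly p (p ^ (k + 1)) (n - k) * qpPoly _ p (2 * k + 1)).coeff i *
        (ultraPoly p (p ^ (k + 1)) (m - k)).coeff j)]
  refine Finset.sum_congr_of_eq_on_inter (fun i hi hik => ?_) (fun i hi hit => ?_) fun i hi _ => ?_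
  all_goals simp only [Finset.mem_range] at *
  · rw [coeff_ultraPoly_mul_qpPoly_eq_zero hp0 hp hkn (by lia) (by lia), zero_mul]
  · rw [ultraCoeff_eq_zero hp0 (s := t - i) (by lia) (by lia)]
    ring
  · rw [coeff_ultraPoly_mul_qpPoly hp0 hp hkn (by lia), coeff_ultraPoly hp0 hp hkm (by lia),
      Nat.cast_sub (by lia)]
    ring

end TripleProduct

section ChebyshevIntegral

lemma integral_exp_mul_I_zpow (j : ℤ) :
    ∫ θ in (-Real.pi)..Real.pi, Complex.exp (θ * Complex.I) ^ j =
      if j = 0 then (2 * Real.pi : ℂ) else 0 := by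
  split_ifs with h
  · simp [h]; ring
  · have hexp (θ : ℝ) : Complex.exp (θ * Complex.I) ^ j = Complex.exp (j * Complex.I * θ) := by
      rw [← Complex.exp_int_mul]
      ring_nf
    simp only [hexp]
    rw [integral_exp_mul_complex (by simp [h]), div_eq_zero_iff, sub_eq_zero,
      Complex.exp_eq_exp_iff_exists_int]
    exact Or.inl ⟨j, by push_cast; ring⟩

lemma integral_exp_mul_I_zpow_mul_eval_sq (H : ℂ[X]) (t : ℕ) :
    ∫ θ in (-Real.pi)..Real.pi,
        Complex.exp (θ * Complex.I) ^ (-(2 * t : ℤ)) * H.eval (Complex.exp (θ * Complex.I) ^ 2) =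
      2 * Real.pi * H.coeff t := by
  have hexpand (θ : ℝ) : Complex.exp (θ * Complex.I) ^ (-(2 * t : ℤ)) *
      H.eval (Complex.exp (θ * Complex.I) ^ 2) =
        ∑ s ∈ H.support, H.coeff s * Complex.exp (θ * Complex.I) ^ (2 * s - 2 * t : ℤ) := by
    rw [Polynomial.eval_eq_sum, Polynomial.sum, Finset.mul_sum]
    refine Finset.sum_congr rfl fun s _ => ?_
    rw [← pow_mul, ← zpow_natCast, mul_left_comm, ← zpow_add₀ (Complex.exp_ne_zero _)]
    congr 2; push_cast; ring
  have hexponent (s : ℕ) : 2 * (s : ℤ) - 2 * t = 0 ↔ s = t := by lia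
  simp only [hexpand]
  rw [intervalIntegral.integral_finsetSum]
  · simp only [intervalIntegral.integral_const_mul, integral_exp_mul_I_zpow, hexponent, mul_ite,
      mul_zero, Finset.sum_ite_eq', Polynomial.mem_support_iff]
    simp +contextual [mul_comm]
  · exact fun s _ => (continuous_const.mul (Continuous.zpow₀ (by fun_prop) _
      fun θ => Or.inl (Complex.exp_ne_zero _))).intervalIntegrable _ _

lemma integral_eq_integral_sin_mul_comp_cos {g : ℝ → ℂ} (hg : Continuous g) :
    ∫ x in (-1 : ℝ)..1, g x = ∫ θ in (0 : ℝ)..Real.pi, Real.sin θ * g (Real.cos θ) := by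
  have h := intervalIntegral.integral_deriv_smul_comp (a := 0) (b := Real.pi) (g := g)
    (fun θ _ => Real.hasDerivAt_cos θ) (by fun_prop) hg
  rw [Real.cos_zero, Real.cos_pi] at h
  rw [intervalIntegral.integral_symm, ← h, ← intervalIntegral.integral_neg]
  simp

lemma integral_add_comp_neg {f : ℝ → ℂ} (hf : Continuous f) (a : ℝ) :
    ∫ θ in (0 : ℝ)..a, (f θ + f (-θ)) = ∫ θ in (-a)..a, f θ := by
  have hint (b c : ℝ) : IntervalIntegrable f volume b c := hf.intervalIntegrable b c
  have hint_neg : IntervalIntegrable (fun θ => f (-θ)) volume 0 a :=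
    (hf.comp continuous_neg).intervalIntegrable 0 a
  rw [intervalIntegral.integral_add (hint _ _) hint_neg,
    intervalIntegral.integral_comp_neg, neg_zero, add_comm,
    intervalIntegral.integral_add_adjacent_intervals (hint _ _) (hint _ _)]

lemma four_mul_sin_mul_sin (θ : ℂ) (N : ℤ) :
    4 * Complex.sin θ * Complex.sin ((N + 1) * θ) =
      (1 - Complex.exp (θ * Complex.I) ^ 2) * Complex.exp (θ * Complex.I) ^ N +
        (1 - Complex.exp (-θ * Complex.I) ^ 2) * Complex.exp (-θ * Complex.I) ^ N := by
  have hsub (φ : ℂ) : (1 - Complex.exp (φ * Complex.I) ^ 2) * Complex.exp (φ * Complex.I) ^ N =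
      Complex.exp (((N + 1) * φ - φ) * Complex.I) -
        Complex.exp (((N + 1) * φ + φ) * Complex.I) := by
    rw [← Complex.exp_nat_mul, ← Complex.exp_int_mul, sub_mul, one_mul, ← Complex.exp_add]
    push_cast
    ring_nf
  rw [hsub, hsub]
  simp only [Complex.exp_mul_I, mul_neg, Complex.cos_neg, Complex.sin_neg, Complex.cos_add,
    Complex.cos_sub, Complex.sin_add, Complex.sin_sub]
  ring

lemma integral_mul_chebyshevU {W : ℂ → ℂ} (hW : Continuous W) (N : ℤ) :
    ∫ x in (-1 : ℝ)..1, 4 * (1 - (x : ℂ) ^ 2) / (Real.sqrt (1 - x ^ 2) : ℂ) * W x *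
        (Polynomial.Chebyshev.U ℂ N).eval (x : ℂ) =
      ∫ θ in (-Real.pi)..Real.pi, (1 - Complex.exp (θ * Complex.I) ^ 2) *
        Complex.exp (θ * Complex.I) ^ N * W (Real.cos θ) := by
  have hsqrt (x : ℝ) : 4 * (1 - (x : ℂ) ^ 2) / (Real.sqrt (1 - x ^ 2) : ℂ) =
      4 * (Real.sqrt (1 - x ^ 2) : ℂ) := by
    rw [mul_div_assoc, mul_right_inj' four_ne_zero]
    have hdiv : (1 - x ^ 2) / Real.sqrt (1 - x ^ 2) = Real.sqrt (1 - x ^ 2) := Real.div_sqrt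
    exact_mod_cast hdiv
  have hcont : Continuous fun θ : ℝ => (1 - Complex.exp (θ * Complex.I) ^ 2) *
      Complex.exp (θ * Complex.I) ^ N * W (Real.cos θ) :=
    (Continuous.mul (by fun_prop) (Continuous.zpow₀ (by fun_prop) _
      fun θ => Or.inl (Complex.exp_ne_zero _))).mul (by fun_prop)
  simp only [hsqrt]
  rw [integral_eq_integral_sin_mul_comp_cos (g := fun x => 4 * (Real.sqrt (1 - x ^ 2) : ℂ) * W x *
      (Polynomial.Chebyshev.U ℂ N).eval (x : ℂ)) (by fun_prop), ← integral_add_comp_neg hcont]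
  refine intervalIntegral.integral_congr fun θ hθ => ?_
  rw [Set.uIcc_of_le Real.pi_pos.le] at hθ
  have hU := Polynomial.Chebyshev.U_complex_cos θ N
  have hfold := four_mul_sin_mul_sin θ N
  simp only [← Real.sin_eq_sqrt_one_sub_cos_sq hθ.1 hθ.2, Complex.ofReal_sin, Complex.ofReal_cos,
    Complex.ofReal_neg, Complex.cos_neg]
  linear_combination 4 * Complex.sin θ * W (Complex.cos θ) * hU + W (Complex.cos θ) * hfold

theorem integral_mul_chebyshevU_eq_coeff {W : ℂ → ℂ} (hW : Continuous W) (N : ℤ) (t : ℕ)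
    (H : ℂ[X]) (hH : ∀ z : ℂ, z ≠ 0 →
      (1 - z ^ 2) * z ^ N * W ((z + z⁻¹) / 2) = z ^ (-(2 * t : ℤ)) * H.eval (z ^ 2)) :
    ((1 / (2 * Real.pi) : ℝ) : ℂ) *
        ∫ x in (-1 : ℝ)..1, 4 * (1 - (x : ℂ) ^ 2) / (Real.sqrt (1 - x ^ 2) : ℂ) * W x *
          (Polynomial.Chebyshev.U ℂ N).eval (x : ℂ) = H.coeff t := by
  have hcos (θ : ℝ) : ((Real.cos θ : ℝ) : ℂ) =
      (Complex.exp (θ * Complex.I) + (Complex.exp (θ * Complex.I))⁻¹) / 2 := by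
    rw [Complex.ofReal_cos, Complex.cos, neg_mul, Complex.exp_neg]
  have hpi : (Real.pi : ℂ) ≠ 0 := mod_cast Real.pi_ne_zero
  simp only [integral_mul_chebyshevU hW, hcos, hH _ (Complex.exp_ne_zero _),
    integral_exp_mul_I_zpow_mul_eval_sq]
  push_cast
  field_simp

end ChebyshevIntegral

/-- The integral `I(t)` for a complex base `q`. The division by `√(1 - x²)` at the two endpoints
`x = ±1` affects only a null set. -/
def ultraIntegral (q : ℂ) (C : ℂ → ℂ → ℕ → ℂ[X]) (k m n t : ℕ) : ℂ :=
  ((1 / (2 * Real.pi) : ℝ) : ℂ) *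
    ∫ x in (-1 : ℝ)..1,
      (4 * (1 - (x : ℂ) ^ 2) *
            ∏ j ∈ Finset.Icc 1 k,
              (1 - 2 * (2 * (x : ℂ) ^ 2 - 1) * q ^ (2 * j) + q ^ (4 * j))) /
          (Real.sqrt (1 - x ^ 2) : ℂ) *
        (C (q ^ 2) (q ^ (2 * k + 2)) (m - k)).eval (x : ℂ) *
        (C (q ^ 2) (q ^ (2 * k + 2)) (n - k)).eval (x : ℂ) *
        (Polynomial.Chebyshev.U ℂ ((m : ℤ) + (n : ℤ) - 2 * (t : ℤ))).eval (x : ℂ)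

section UltrasphericalIntegral

lemma eval_qpPoly (c p u : ℂ) (n : ℕ) : (qpPoly c p n).eval u = qp (c * u) p n := by
  simp only [qpPoly, qp, Polynomial.eval_prod, Polynomial.eval_sub, Polynomial.eval_one,
    Polynomial.eval_mul, Polynomial.eval_C, Polynomial.eval_X]
  exact Finset.prod_congr rfl fun j _ => by ring

lemma prod_weight_mul_pow {p u : ℂ} (hp0 : p ≠ 0) (hu : u ≠ 0) (k : ℕ) :
    (1 - u) * (∏ j ∈ Finset.Icc 1 k, (1 - u * p ^ j) * (1 - u⁻¹ * p ^ j)) * u ^ k =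
      (-1) ^ k * (∏ j ∈ Finset.Icc 1 k, p ^ j) * qp (p ^ (-(k : ℤ)) * u) p (2 * k + 1) := by
  simp only [_root_.zpow_neg, zpow_natCast]
  induction k with
  | zero => simp [qp]
  | succ k ih =>
    have hfirst : (p ^ (k + 1))⁻¹ * u * p = (p ^ k)⁻¹ * u := by field_simp; ring
    have hlast : (p ^ k)⁻¹ * u * p ^ (2 * k + 1) = u * p ^ (k + 1) := by field_simp; ring
    have hfactor : (1 - u * p ^ (k + 1)) * (1 - u⁻¹ * p ^ (k + 1)) * u =
        -p ^ (k + 1) * (1 - (p ^ (k + 1))⁻¹ * u) * (1 - u * p ^ (k + 1)) := by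
      field_simp; ring
    rw [Finset.prod_Icc_succ_top (by lia), Finset.prod_Icc_succ_top (by lia),
      show 2 * (k + 1) + 1 = 2 * k + 1 + 1 + 1 by ring, qp_succ', qp_succ, hfirst, hlast]
    linear_combination (1 - u * p ^ (k + 1)) * (1 - u⁻¹ * p ^ (k + 1)) * u * ih +
      (-1) ^ k * (∏ j ∈ Finset.Icc 1 k, p ^ j) * qp ((p ^ k)⁻¹ * u) p (2 * k + 1) * hfactor

lemma prod_sq_pow (q : ℂ) (k : ℕ) : ∏ j ∈ Finset.Icc 1 k, (q ^ 2) ^ j = q ^ (k * (k + 1)) := by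
  induction k with
  | zero => simp
  | succ k ih => rw [Finset.prod_Icc_succ_top (by lia), ih]; ring

lemma weight_factor_eq (q : ℂ) {z : ℂ} (hz : z ≠ 0) (j : ℕ) :
    1 - 2 * (2 * ((z + z⁻¹) / 2) ^ 2 - 1) * q ^ (2 * j) + q ^ (4 * j) =
      (1 - z ^ 2 * (q ^ 2) ^ j) * (1 - (z ^ 2)⁻¹ * (q ^ 2) ^ j) := by
  rw [← pow_mul, show 4 * j = 2 * j + 2 * j by ring, pow_add]
  field_simp
  ring

theorem ultraIntegral_eq_coeff {q : ℂ} (hq0 : q ≠ 0) {C : ℂ → ℂ → ℕ → ℂ[X]} (hC : IsUltra C)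
    {k m n : ℕ} (hkm : k ≤ m) (hkn : k ≤ n) (t : ℕ) :
    ultraIntegral q C k m n t = (-1) ^ k * q ^ (k * (k + 1)) *
      (ultraPoly (q ^ 2) ((q ^ 2) ^ (k + 1)) (n - k) *
        qpPoly ((q ^ 2) ^ (-(k : ℤ))) (q ^ 2) (2 * k + 1) *
        ultraPoly (q ^ 2) ((q ^ 2) ^ (k + 1)) (m - k)).coeff t := by
  have hβ : q ^ (2 * k + 2) = (q ^ 2) ^ (k + 1) := by ring
  have hintegrand (x : ℂ) (s w a b : ℂ) : 4 * (1 - x ^ 2) * w / s * a * b =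
      4 * (1 - x ^ 2) / s * (w * a * b) := by ring
  simp only [ultraIntegral, hβ, hintegrand]
  rw [← Polynomial.coeff_C_mul]
  refine integral_mul_chebyshevU_eq_coeff (W := fun x => (∏ j ∈ Finset.Icc 1 k,
    (1 - 2 * (2 * x ^ 2 - 1) * q ^ (2 * j) + q ^ (4 * j))) *
      (C (q ^ 2) ((q ^ 2) ^ (k + 1)) (m - k)).eval x *
      (C (q ^ 2) ((q ^ 2) ^ (k + 1)) (n - k)).eval x) (by fun_prop) _ _ _ fun z hz => ?_
  have hweight := prod_weight_mul_pow (pow_ne_zero 2 hq0) (pow_ne_zero 2 hz) k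
  have hC_eval (M : ℕ) : (C (q ^ 2) ((q ^ 2) ^ (k + 1)) M).eval ((z + z⁻¹) / 2) =
      Chat (q ^ 2) ((q ^ 2) ^ (k + 1)) M z := (hC _ _ M).2 z hz
  have hzpow : z ^ ((m : ℤ) + n - 2 * t) =
      z ^ (-(2 * t : ℤ)) * (z ^ (m - k) * z ^ (n - k) * (z ^ 2) ^ k) := by
    rw [← pow_mul, ← pow_add, ← pow_add, ← zpow_natCast, ← zpow_add₀ hz]
    congr 1
    lia
  simp only [weight_factor_eq q hz, hC_eval, hzpow, Polynomial.eval_mul, Polynomial.eval_C,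
    eval_qpPoly, ultraPoly_eval_sq _ _ _ hz, ← prod_sq_pow]
  linear_combination z ^ (-(2 * t : ℤ)) * z ^ (m - k) * z ^ (n - k) *
    Chat (q ^ 2) ((q ^ 2) ^ (k + 1)) (m - k) z *
    Chat (q ^ 2) ((q ^ 2) ^ (k + 1)) (n - k) z * hweight

end UltrasphericalIntegral

section MainTheorem

lemma qp_self_mul_div_eq_one {p : ℂ} (hp : ¬IsOfFinOrder p) (k r : ℕ) :
    qp p p k * (qp (p ^ (k + 1)) p r / qp p p (k + r)) = 1 := by
  have h := qp_self_ne_zero hp (k + r)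
  rw [mul_div_assoc', pow_succ', ← qp_add, div_self h]

lemma not_isOfFinOrder_of_pos_of_lt_one {q : ℝ} (hq0 : 0 < q) (hq1 : q < 1) :
    ¬IsOfFinOrder (q : ℂ) := fun h => by
  have hnorm := h.norm_eq_one
  rw [Complex.norm_real, Real.norm_of_nonneg hq0.le] at hnorm
  exact hq1.ne hnorm

theorem stmt15_general {q : ℂ} (hq0 : q ≠ 0) (hq : ¬IsOfFinOrder q)
    {C : ℂ → ℂ → ℕ → ℂ[X]} (hC : IsUltra C) {k m n : ℕ} (hkm : k ≤ m) (hmn : m ≤ n) (t : ℕ) :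
    (m < t → t ≤ n → ultraIntegral q C k m n t = 0) ∧
      (t ≤ m → ultraIntegral q C k m n t =
        (-1) ^ k * q ^ (k * (k + 1)) * qp (q ^ 2) (q ^ 2) k *
          (qp (q ^ (2 * k + 2)) (q ^ 2) (m + n - 2 * k) / qp (q ^ 2) (q ^ 2) (m + n - k)) *
          (qp (q ^ (2 * k + 2)) (q ^ 2) (m - k) / qp (q ^ 2) (q ^ 2) (m - k)) *
          (qp (q ^ (2 * k + 2)) (q ^ 2) (n - k) / qp (q ^ 2) (q ^ 2) (n - k)) *
          qRacah (q ^ 2) 1 1 (q ^ (-(2 * (m : ℤ) + 2))) (q ^ (-(2 * (n : ℤ) + 2))) k t) := by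
  have hp0 : q ^ 2 ≠ 0 := pow_ne_zero 2 hq0
  have hp : ¬IsOfFinOrder (q ^ 2) := by simpa [isOfFinOrder_pow] using hq
  have hkn := hkm.trans hmn
  rw [ultraIntegral_eq_coeff hq0 hC hkm hkn]
  refine ⟨fun hmt htn => ?_, fun htm => ?_⟩
  · rw [coeff_ultraPoly_mul_qpPoly_mul_ultraPoly_eq_zero hp0 hp hkm hkn hmt htn, mul_zero]
  · have hpow (a : ℕ) : q ^ (-(2 * (a : ℤ) + 2)) = (q ^ 2) ^ (-(a + 1 : ℤ)) := by
      rw [show -(2 * (a : ℤ) + 2) = (2 : ℕ) * -(a + 1) by push_cast; ring, _root_.zpow_mul,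
        zpow_natCast]
    have hone := qp_self_mul_div_eq_one hp k (m + n - 2 * k)
    rw [show k + (m + n - 2 * k) = m + n - k by lia] at hone
    rw [coeff_ultraPoly_mul_qpPoly_mul_ultraPoly hp0 hp hkm hkn htm (htm.trans hmn), hpow, hpow,
      show q ^ (2 * k + 2) = (q ^ 2) ^ (k + 1) by ring, ← ultraCoeff_natCast hp,
      ← ultraCoeff_natCast hp, Nat.cast_sub hkm, Nat.cast_sub hkn, mul_assoc _ (qp _ _ k), hone]
    ring

end MainTheorem

/-- evaluation of the integral of a product of two continuous
q-ultraspherical polynomials against a Chebyshev polynomial with respect to the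
weight `w(x;q^{2k+2}|q²)/√(1-x²)`, in terms of q-Racah polynomials. -/
theorem stmt15 (q : ℝ) (hq0 : 0 < q) (hq1 : q < 1)
    (C : ℂ → ℂ → ℕ → Polynomial ℂ) (hC : IsUltra C)
    (k m n t : ℕ) (hkm : k ≤ m) (hmn : m ≤ n) :
    ((m < t ∧ 2 * t ≤ m + n) →
        ((1 / (2 * Real.pi) : ℝ) : ℂ) *
            ∫ x in (-1 : ℝ)..1,
              (4 * (1 - (x : ℂ) ^ 2) *
                    ∏ j ∈ Finset.Icc 1 k,
                      (1 - 2 * (2 * (x : ℂ) ^ 2 - 1) * (q : ℂ) ^ (2 * j) +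
                        (q : ℂ) ^ (4 * j))) /
                  (Real.sqrt (1 - x ^ 2) : ℂ) *
                (C ((q : ℂ) ^ 2) ((q : ℂ) ^ (2 * k + 2)) (m - k)).eval (x : ℂ) *
                (C ((q : ℂ) ^ 2) ((q : ℂ) ^ (2 * k + 2)) (n - k)).eval (x : ℂ) *
                (Polynomial.Chebyshev.U ℂ ((m : ℤ) + (n : ℤ) - 2 * (t : ℤ))).eval (x : ℂ) =
          0) ∧
      (t ≤ m →
        ((1 / (2 * Real.pi) : ℝ) : ℂ) *
            ∫ x in (-1 : ℝ)..1,
              (4 * (1 - (x : ℂ) ^ 2) *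
                    ∏ j ∈ Finset.Icc 1 k,
                      (1 - 2 * (2 * (x : ℂ) ^ 2 - 1) * (q : ℂ) ^ (2 * j) +
                        (q : ℂ) ^ (4 * j))) /
                  (Real.sqrt (1 - x ^ 2) : ℂ) *
                (C ((q : ℂ) ^ 2) ((q : ℂ) ^ (2 * k + 2)) (m - k)).eval (x : ℂ) *
                (C ((q : ℂ) ^ 2) ((q : ℂ) ^ (2 * k + 2)) (n - k)).eval (x : ℂ) *
                (Polynomial.Chebyshev.U ℂ ((m : ℤ) + (n : ℤ) - 2 * (t : ℤ))).eval (x : ℂ) =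
          (-1 : ℂ) ^ k * (q : ℂ) ^ (k * (k + 1)) * qp ((q : ℂ) ^ 2) ((q : ℂ) ^ 2) k *
            (qp ((q : ℂ) ^ (2 * k + 2)) ((q : ℂ) ^ 2) (m + n - 2 * k) /
              qp ((q : ℂ) ^ 2) ((q : ℂ) ^ 2) (m + n - k)) *
            (qp ((q : ℂ) ^ (2 * k + 2)) ((q : ℂ) ^ 2) (m - k) /
              qp ((q : ℂ) ^ 2) ((q : ℂ) ^ 2) (m - k)) *
            (qp ((q : ℂ) ^ (2 * k + 2)) ((q : ℂ) ^ 2) (n - k) /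
              qp ((q : ℂ) ^ 2) ((q : ℂ) ^ 2) (n - k)) *
            qRacah ((q : ℂ) ^ 2) 1 1 ((q : ℂ) ^ (-(2 * (m : ℤ) + 2)))
              ((q : ℂ) ^ (-(2 * (n : ℤ) + 2))) k t) :=
  have h := stmt15_general (mod_cast hq0.ne') (not_isOfFinOrder_of_pos_of_lt_one hq0 hq1) hC hkm
    hmn t
  ⟨fun ht => h.1 ht.1 (by lia), h.2⟩

end
end

section
/- (q-analogue of Sheppard's transformation.) For every n ∈ ℕ and all nonzero complex numbers b, c, d, e: Σ_{k=0}^{n} (dq^k;q)_{n-k} (eq^k;q)_{n-k} · [(q^{-n};q)_k (b;q)_k (c;q)_k / (q;q)_k] · (d e q^n/(b c))^k = c^n · Σ_{k=0}^{n} q^{2k(n-1) - k(k-1)} · (d e/(b c²))^k · (d/c;q)_{n-k} (e/c;q)_{n-k} · [(q^{-n};q)_k (c;q)_k (b c q^{1-n}/(d e);q)_k / (q;q)_k] · q^k. -/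
open Finset Polynomial MeasureTheory Matrix
open scoped BigOperators ComplexOrder

noncomputable section

/-!
Put `u = d / c`, `v = e / c`, `x = d e / (b c)`. Since
`(q⁻ⁿ;q)_k / (q;q)_k = [n choose k]_q (-q⁻ⁿ)^k q^(k choose 2)`, and since reversing the order of the
factors relates `(q^(1-n) / x;q)_k` to `(x q^(n-k);q)_k`, both sides are polynomials in
`b, c, u, v, x, q` subject to the single relation `b x = c u v`. By the two `q`-Pascal rules each
of them satisfies
`S_{n+1}(b, c) = (1 - c u q^n) (1 - c v q^n) S_n(b, c) - q^n (x - c u v) (1 - c) S_n(b q, c q)`,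
and the relation survives `(b, c) ↦ (b q, c q)`, so the two sides agree by induction on `n`.
-/

section CommRing

variable {R : Type*} [CommRing R]

/-- The `q`-shifted factorial `(a;q)_n` over a commutative ring; `qp` is the case of `ℂ`. -/
def qPochhammer (a q : R) (n : ℕ) : R := ∏ j ∈ range n, (1 - a * q ^ j)

lemma qPochhammer_zero (a q : R) : qPochhammer a q 0 = 1 := prod_range_zero _

lemma qPochhammer_succ (a q : R) (n : ℕ) :
    qPochhammer a q (n + 1) = qPochhammer a q n * (1 - a * q ^ n) :=
  prod_range_succ _ _

lemma qPochhammer_succ' (a q : R) (n : ℕ) :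
    qPochhammer a q (n + 1) = (1 - a) * qPochhammer (a * q) q n := by
  simp only [qPochhammer, prod_range_succ', pow_zero, mul_one, mul_assoc, ← pow_succ']
  exact mul_comm _ _

lemma one_sub_mul_qPochhammer_mul (a q : R) (n : ℕ) :
    (1 - a) * qPochhammer (a * q) q n = qPochhammer a q n * (1 - a * q ^ n) := by
  rw [← qPochhammer_succ', qPochhammer_succ]

/-- The Gaussian binomial coefficient of `n` over `k`, defined by the `q`-Pascal recurrence so that
it makes sense in every commutative ring, including when `q` is a root of unity. -/
def qChoose (q : R) : ℕ → ℕ → R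
  | _, 0 => 1
  | 0, _ + 1 => 0
  | n + 1, k + 1 => qChoose q n k + q ^ (k + 1) * qChoose q n (k + 1)

lemma qChoose_zero_right (q : R) (n : ℕ) : qChoose q n 0 = 1 := by
  cases n <;> rfl

lemma qChoose_succ_succ (q : R) (n k : ℕ) :
    qChoose q (n + 1) (k + 1) = qChoose q n k + q ^ (k + 1) * qChoose q n (k + 1) :=
  rfl

lemma qChoose_eq_zero_of_lt (q : R) {n k : ℕ} (h : n < k) : qChoose q n k = 0 := by
  induction n generalizing k with
  | zero => obtain ⟨k, rfl⟩ := Nat.exists_eq_succ_of_ne_zero h.ne'; rfl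
  | succ n ih =>
    obtain ⟨k, rfl⟩ := Nat.exists_eq_succ_of_ne_zero (Nat.ne_zero_of_lt h)
    rw [Nat.succ_eq_add_one, qChoose_succ_succ, ih (by lia), ih (by lia), mul_zero, add_zero]

lemma qChoose_self (q : R) (n : ℕ) : qChoose q n n = 1 := by
  induction n with
  | zero => rfl
  | succ n ih =>
    rw [qChoose_succ_succ, ih, qChoose_eq_zero_of_lt q n.lt_succ_self, mul_zero, add_zero]

lemma pow_sub_mul_pow_mul_qChoose (q : R) (n k : ℕ) :
    q ^ (n - k) * q ^ k * qChoose q n k = q ^ n * qChoose q n k := by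
  rcases le_or_gt k n with h | h
  · rw [pow_sub_mul_pow q h]
  · rw [qChoose_eq_zero_of_lt q h, mul_zero, mul_zero]

lemma qChoose_succ_succ' (q : R) (n k : ℕ) :
    qChoose q (n + 1) (k + 1) = q ^ (n - k) * qChoose q n k + qChoose q n (k + 1) := by
  induction n generalizing k with
  | zero => cases k <;> simp [qChoose]
  | succ n ih =>
    cases k with
    | zero =>
      have h := ih 0
      rw [qChoose_succ_succ, qChoose_zero_right, Nat.sub_zero] at h ⊢
      rw [qChoose_succ_succ q n 0, qChoose_zero_right]
      linear_combination q * h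
    | succ k =>
      have hpow : q ^ (k + 2) * q ^ (n - (k + 1)) * qChoose q n (k + 1) =
          q ^ (n - k) * q ^ (k + 1) * qChoose q n (k + 1) := by
        rcases lt_or_ge n (k + 1) with h | h
        · rw [qChoose_eq_zero_of_lt q h, mul_zero, mul_zero]
        · rw [← pow_add, ← pow_add, show k + 2 + (n - (k + 1)) = n - k + (k + 1) by lia]
      rw [qChoose_succ_succ q (n + 1), Nat.add_sub_add_right]
      linear_combination ih k + q ^ (k + 2) * ih (k + 1) + hpow - qChoose_succ_succ q n (k + 1)
        - q ^ (n - k) * qChoose_succ_succ q n k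

lemma one_sub_pow_mul_qChoose_succ_succ (q : R) (n k : ℕ) :
    (1 - q ^ (k + 1)) * qChoose q (n + 1) (k + 1) = (1 - q ^ (n + 1)) * qChoose q n k := by
  linear_combination qChoose_succ_succ q n k - q ^ (k + 1) * qChoose_succ_succ' q n k
    - q * pow_sub_mul_pow_mul_qChoose q n k

lemma qChoose_add_succ_succ (q : R) (i j : ℕ) :
    qChoose q (i + 1 + (j + 1)) (i + 1) =
      qChoose q (i + (j + 1)) i + q ^ (i + 1) * qChoose q (i + 1 + j) (i + 1) := by
  rw [← add_assoc (i + 1), qChoose_succ_succ, Nat.succ_add_eq_add_succ]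

lemma qChoose_add_succ_succ' (q : R) (i j : ℕ) :
    qChoose q (i + 1 + (j + 1)) (i + 1) =
      q ^ (j + 1) * qChoose q (i + (j + 1)) i + qChoose q (i + 1 + j) (i + 1) := by
  rw [← add_assoc (i + 1), qChoose_succ_succ', Nat.succ_add_eq_add_succ, Nat.add_sub_cancel_left]

lemma qPochhammer_self_mul_qChoose (q : R) (m k : ℕ) :
    qPochhammer q q k * qChoose q (m + k) k = qPochhammer (q ^ (m + 1)) q k := by
  induction k with
  | zero => simp only [qPochhammer_zero, qChoose_zero_right, mul_one]
  | succ k ih =>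
    rw [qPochhammer_succ, qPochhammer_succ, ← ih, ← add_assoc]
    linear_combination qPochhammer q q k * one_sub_pow_mul_qChoose_succ_succ q (m + k) k

lemma sum_antidiagonal_succ_of_pascal {M : Type*} [AddCommMonoid M] {T U V : ℕ → ℕ → M}
    (hU : ∀ j, T 0 (j + 1) = U 0 j) (hV : ∀ i, T (i + 1) 0 = V i 0)
    (hUV : ∀ i j, T (i + 1) (j + 1) = U (i + 1) j + V i (j + 1)) (n : ℕ) :
    ∑ p ∈ antidiagonal (n + 1), T p.1 p.2 = ∑ p ∈ antidiagonal n, (U p.1 p.2 + V p.1 p.2) := by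
  rw [sum_add_distrib, Nat.sum_antidiagonal_succ]
  cases n with
  | zero => simp [hU, hV]
  | succ n =>
    rw [Nat.sum_antidiagonal_succ', Nat.sum_antidiagonal_succ (f := fun p ↦ U p.1 p.2),
      Nat.sum_antidiagonal_succ' (f := fun p ↦ V p.1 p.2)]
    simp only [hU, hV, hUV, sum_add_distrib]
    ac_rfl

lemma qChoose_mul_qPochhammer_pascal (q x : R) (i j : ℕ) :
    qChoose q (i + 1 + (j + 1)) (i + 1) * qPochhammer (x * q ^ (j + 1)) q (i + 1) =
      q ^ (i + 1) * qChoose q (i + 1 + j) (i + 1) * qPochhammer (x * q ^ j) q (i + 1) +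
        (1 - x * q ^ (i + 2 * (j + 1))) * qChoose q (i + (j + 1)) i *
          qPochhammer (x * q ^ (j + 1)) q i := by
  -- The two `q`-Pascal rules give the constant part and the `x`-part of `1 - x q ^ (i + j + 1)`.
  have hx : x * q ^ j * q = x * q ^ (j + 1) := by ring
  rw [qPochhammer_succ, qPochhammer_succ' (x * q ^ j), hx]
  linear_combination qPochhammer (x * q ^ (j + 1)) q i *
    (qChoose_add_succ_succ q i j - x * q ^ (j + 1 + i) * qChoose_add_succ_succ' q i j)

/-- The left-hand side of Sheppard's transformation, without denominators: the parameters `d`, `e`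
of the classical form are `c * u`, `c * v`, and `x` is the argument of the series. -/
def sheppardLeft (q u v x : R) (n : ℕ) (b c : R) : R :=
  ∑ p ∈ antidiagonal n, qChoose q (p.1 + p.2) p.1 *
    ((-1) ^ p.1 * q ^ p.1.choose 2 * qPochhammer b q p.1 * qPochhammer c q p.1 *
      qPochhammer (c * u * q ^ p.1) q p.2 * qPochhammer (c * v * q ^ p.1) q p.2 * x ^ p.1)

/-- The right-hand side of Sheppard's transformation, without denominators, in the parameters of
`sheppardLeft`; here `b` has been eliminated through the relation `b * x = c * u * v`. -/
def sheppardRight (q u v x : R) (n : ℕ) (c : R) : R :=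
  ∑ p ∈ antidiagonal n, qChoose q (p.1 + p.2) p.1 * qPochhammer (x * q ^ p.2) q p.1 *
    (qPochhammer c q p.1 * c ^ p.2 * qPochhammer u q p.2 * qPochhammer v q p.2)

lemma sheppardLeft_succ (q u v x : R) (n : ℕ) (b c : R) :
    sheppardLeft q u v x (n + 1) b c =
      (1 - c * u * q ^ n) * (1 - c * v * q ^ n) * sheppardLeft q u v x n b c -
        q ^ n * x * (1 - b) * (1 - c) * sheppardLeft q u v x n (b * q) (c * q) := by
  let G (i j : ℕ) : R := (-1) ^ i * q ^ i.choose 2 * qPochhammer b q i * qPochhammer c q i *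
      qPochhammer (c * u * q ^ i) q j * qPochhammer (c * v * q ^ i) q j * x ^ i
  have pascal : sheppardLeft q u v x (n + 1) b c = ∑ p ∈ antidiagonal n,
      (qChoose q (p.1 + p.2) p.1 * G p.1 (p.2 + 1) +
        q ^ p.2 * qChoose q (p.1 + p.2) p.1 * G (p.1 + 1) p.2) := by
    refine sum_antidiagonal_succ_of_pascal (T := fun i j ↦ qChoose q (i + j) i * G i j)
      (U := fun i j ↦ qChoose q (i + j) i * G i (j + 1))
      (V := fun i j ↦ q ^ j * qChoose q (i + j) i * G (i + 1) j) ?_ ?_ ?_ n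
    · intro j
      simp only [qChoose_zero_right]
    · intro i
      simp only [add_zero, qChoose_self, pow_zero, one_mul]
    · intro i j
      linear_combination G (i + 1) (j + 1) * qChoose_add_succ_succ' q i j
  rw [pascal, sheppardLeft, sheppardLeft, mul_sum, mul_sum, ← sum_sub_distrib]
  refine sum_congr rfl fun ⟨i, j⟩ hij ↦ ?_
  obtain rfl := mem_antidiagonal.1 hij
  simp only [G, qPochhammer_succ _ q j, qPochhammer_succ' _ q i, Nat.choose_succ_succ' i 1,
    Nat.choose_one_right]
  rw [show c * q * u * q ^ i = c * u * q ^ (i + 1) by ring,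
    show c * q * v * q ^ i = c * v * q ^ (i + 1) by ring]
  ring

lemma sheppardRight_succ (q u v x : R) (n : ℕ) (c : R) :
    sheppardRight q u v x (n + 1) c =
      (1 - c * u * q ^ n) * (1 - c * v * q ^ n) * sheppardRight q u v x n c -
        q ^ n * (x - c * u * v) * (1 - c) * sheppardRight q u v x n (c * q) := by
  let A (i j : ℕ) : R := qPochhammer c q i * c ^ j * qPochhammer u q j * qPochhammer v q j
  have pascal : sheppardRight q u v x (n + 1) c = ∑ p ∈ antidiagonal n,
      (q ^ p.1 * qChoose q (p.1 + p.2) p.1 * qPochhammer (x * q ^ p.2) q p.1 * A p.1 (p.2 + 1) +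
        (1 - x * q ^ (p.1 + 2 * p.2)) * qChoose q (p.1 + p.2) p.1 *
          qPochhammer (x * q ^ p.2) q p.1 * A (p.1 + 1) p.2) := by
    refine sum_antidiagonal_succ_of_pascal
      (T := fun i j ↦ qChoose q (i + j) i * qPochhammer (x * q ^ j) q i * A i j)
      (U := fun i j ↦ q ^ i * qChoose q (i + j) i * qPochhammer (x * q ^ j) q i * A i (j + 1))
      (V := fun i j ↦ (1 - x * q ^ (i + 2 * j)) * qChoose q (i + j) i *
          qPochhammer (x * q ^ j) q i * A (i + 1) j) ?_ ?_ ?_ n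
    · intro j
      simp only [qChoose_zero_right, qPochhammer_zero, pow_zero, one_mul]
    · intro i
      simp only [add_zero, mul_zero, qChoose_self, pow_zero, mul_one, one_mul, qPochhammer_succ x]
      ring
    · intro i j
      rw [qChoose_mul_qPochhammer_pascal, add_mul]
  rw [pascal, sheppardRight, sheppardRight, mul_sum, mul_sum, ← sum_sub_distrib]
  refine sum_congr rfl fun ⟨i, j⟩ hij ↦ ?_
  obtain rfl := mem_antidiagonal.1 hij
  simp only [A, qPochhammer_succ]
  linear_combination q ^ (i + j) * (x - c * u * v) * qChoose q (i + j) i *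
    qPochhammer (x * q ^ j) q i * ((c * q) ^ j * qPochhammer u q j * qPochhammer v q j) *
      one_sub_mul_qPochhammer_mul c q i

theorem sheppardLeft_eq_sheppardRight (q u v x : R) (n : ℕ) {b c : R} (h : b * x = c * u * v) :
    sheppardLeft q u v x n b c = sheppardRight q u v x n c := by
  induction n generalizing b c with
  | zero => simp [sheppardLeft, sheppardRight, qPochhammer_zero]
  | succ n ih =>
    rw [sheppardLeft_succ, sheppardRight_succ, ih h, ih (by linear_combination q * h)]
    linear_combination q ^ n * (1 - c) * sheppardRight q u v x n (c * q) * h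

end CommRing

section Field

variable {K : Type*} [Field K]

lemma qPochhammer_self_ne_zero {q : K} {n : ℕ} (hq : ∀ j, 0 < j → j ≤ n → q ^ j ≠ 1) :
    qPochhammer q q n ≠ 0 := by
  refine prod_ne_zero_iff.2 fun j hj ↦ ?_
  rw [← pow_succ', sub_ne_zero]
  exact (hq (j + 1) j.succ_pos (mem_range.1 hj)).symm

lemma qPochhammer_reflect {q a b : K} {n : ℕ} (hq : q ≠ 0) (h : a * b * q ^ n = q) :
    qPochhammer a q n = qPochhammer b q n * (-a) ^ n * q ^ n.choose 2 := by
  have hpow : ∏ j ∈ range n, (-a) * q ^ j = (-a) ^ n * q ^ n.choose 2 := by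
    rw [prod_mul_distrib, prod_const, card_range, prod_pow_eq_pow_sum, sum_range_id,
      Nat.choose_two_right]
  rw [mul_assoc, ← hpow, qPochhammer, qPochhammer, ← prod_range_reflect (fun j ↦ 1 - b * q ^ j),
    ← prod_mul_distrib]
  refine prod_congr rfl fun j hj ↦ ?_
  have hab : a * b * (q ^ (n - 1 - j) * q ^ j) = 1 := by
    refine mul_right_cancel₀ hq ?_
    rw [← pow_add, mul_assoc, ← pow_succ, one_mul, ← h]
    congr 2
    have := mem_range.1 hj
    lia
  linear_combination -hab

lemma qPochhammer_zpow_neg {q : K} {n k : ℕ} (hq : q ≠ 0) (hk : k ≤ n) :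
    qPochhammer (q ^ (-n : ℤ)) q k =
      qPochhammer q q k * qChoose q n k * (-q ^ (-n : ℤ)) ^ k * q ^ k.choose 2 := by
  obtain ⟨m, rfl⟩ := Nat.exists_eq_add_of_le' hk
  rw [qPochhammer_self_mul_qChoose]
  refine qPochhammer_reflect hq ?_
  rw [_root_.zpow_neg, zpow_natCast]
  field_simp
  ring

lemma qPochhammer_zpow_neg_div {q : K} {n k : ℕ} (hq0 : q ≠ 0)
    (hq : ∀ j, 0 < j → j ≤ n → q ^ j ≠ 1) (hk : k ≤ n) :
    qPochhammer (q ^ (-n : ℤ)) q k / qPochhammer q q k =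
      qChoose q n k * (-q ^ (-n : ℤ)) ^ k * q ^ k.choose 2 := by
  have hqk := qPochhammer_self_ne_zero fun j hj hjk ↦ hq j hj (hjk.trans hk)
  rw [qPochhammer_zpow_neg hq0 hk]
  field_simp

lemma qPochhammer_zpow_neg_div_mul_pow {q : K} {n k : ℕ} (hq0 : q ≠ 0)
    (hq : ∀ j, 0 < j → j ≤ n → q ^ j ≠ 1) (hk : k ≤ n) :
    qPochhammer (q ^ (-n : ℤ)) q k / qPochhammer q q k * (q ^ n) ^ k =
      qChoose q n k * (-1) ^ k * q ^ k.choose 2 := by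
  have hpow : (-q ^ (-n : ℤ)) ^ k * (q ^ n) ^ k = (-1) ^ k := by
    rw [← mul_pow, neg_mul, _root_.zpow_neg, zpow_natCast, inv_mul_cancel₀ (pow_ne_zero n hq0)]
  rw [qPochhammer_zpow_neg_div hq0 hq hk, mul_right_comm, mul_assoc (qChoose q n k), hpow]

lemma qPochhammer_mul_pow_sub {q x : K} {n k : ℕ} (hq : q ≠ 0) (hx : x ≠ 0) (hk : k ≤ n) :
    qPochhammer (x * q ^ (n - k)) q k =
      qPochhammer (q ^ (1 - n : ℤ) / x) q k * (-(x * q ^ (n - k))) ^ k * q ^ k.choose 2 := by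
  refine qPochhammer_reflect hq ?_
  rw [mul_right_comm, mul_assoc x, pow_sub_mul_pow q hk, zpow_sub₀ hq, zpow_one, zpow_natCast]
  field_simp

lemma zpow_mul_neg_zpow_neg_pow {q : K} {n k : ℕ} (hq : q ≠ 0) (hk : k ≤ n) :
    q ^ (2 * (k : ℤ) * ((n : ℤ) - 1) - (k : ℤ) * ((k : ℤ) - 1)) * q ^ k *
      (-q ^ (-n : ℤ)) ^ k = (-q ^ (n - k)) ^ k := by
  rw [neg_pow, neg_pow (q ^ (n - k)), mul_left_comm, ← zpow_natCast q (n - k)]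
  simp only [← zpow_natCast _ k, ← _root_.zpow_mul, ← zpow_add₀ hq]
  congr 2
  push_cast [Nat.cast_sub hk]
  ring

lemma zpow_mul_qPochhammer_zpow_neg_div {q x : K} {n k : ℕ} (hq0 : q ≠ 0)
    (hq : ∀ j, 0 < j → j ≤ n → q ^ j ≠ 1) (hx : x ≠ 0) (hk : k ≤ n) :
    q ^ (2 * (k : ℤ) * ((n : ℤ) - 1) - (k : ℤ) * ((k : ℤ) - 1)) * q ^ k * x ^ k *
        (qPochhammer (q ^ (-n : ℤ)) q k / qPochhammer q q k) *
          qPochhammer (q ^ (1 - n : ℤ) / x) q k =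
      qChoose q n k * qPochhammer (x * q ^ (n - k)) q k := by
  rw [qPochhammer_zpow_neg_div hq0 hq hk, qPochhammer_mul_pow_sub hq0 hx hk, ← mul_neg, mul_pow,
    ← zpow_mul_neg_zpow_neg_pow hq0 hk]
  ring

lemma sheppardLeft_eq_sum {q : K} {n : ℕ} (hq0 : q ≠ 0) (hq : ∀ j, 0 < j → j ≤ n → q ^ j ≠ 1)
    {c : K} (hc : c ≠ 0) (b d e x : K) :
    sheppardLeft q (d / c) (e / c) x n b c =
      ∑ k ∈ range (n + 1), qPochhammer (d * q ^ k) q (n - k) * qPochhammer (e * q ^ k) q (n - k) *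
        (qPochhammer (q ^ (-n : ℤ)) q k * qPochhammer b q k * qPochhammer c q k /
          qPochhammer q q k) * (x * q ^ n) ^ k := by
  rw [sheppardLeft, Nat.sum_antidiagonal_eq_sum_range_succ_mk]
  refine sum_congr rfl fun k hk ↦ ?_
  have hkn : k ≤ n := Nat.lt_succ_iff.1 (mem_range.1 hk)
  simp only [mul_div_cancel₀ _ hc, Nat.add_sub_cancel' hkn]
  linear_combination -(qPochhammer b q k * qPochhammer c q k * qPochhammer (d * q ^ k) q (n - k) *
    qPochhammer (e * q ^ k) q (n - k) * x ^ k) * qPochhammer_zpow_neg_div_mul_pow hq0 hq hkn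

lemma sheppardRight_eq_sum {q : K} {n : ℕ} (hq0 : q ≠ 0) (hq : ∀ j, 0 < j → j ≤ n → q ^ j ≠ 1)
    {c x : K} (hc : c ≠ 0) (hx : x ≠ 0) (u v : K) :
    sheppardRight q u v x n c =
      c ^ n * ∑ k ∈ range (n + 1), q ^ (2 * (k : ℤ) * ((n : ℤ) - 1) - (k : ℤ) * ((k : ℤ) - 1)) *
        (x / c) ^ k * qPochhammer u q (n - k) * qPochhammer v q (n - k) *
          (qPochhammer (q ^ (-n : ℤ)) q k * qPochhammer c q k *
            qPochhammer (q ^ (1 - n : ℤ) / x) q k / qPochhammer q q k) * q ^ k := by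
  rw [sheppardRight, Nat.sum_antidiagonal_eq_sum_range_succ_mk, mul_sum]
  refine sum_congr rfl fun k hk ↦ ?_
  have hkn : k ≤ n := Nat.lt_succ_iff.1 (mem_range.1 hk)
  have hcpow : c ^ n * (x / c) ^ k = c ^ (n - k) * x ^ k := by
    rw [div_pow, ← pow_sub_mul_pow c hkn]
    field_simp
  rw [Nat.add_sub_cancel' hkn, ← zpow_mul_qPochhammer_zpow_neg_div hq0 hq hx hkn]
  linear_combination -(q ^ (2 * (k : ℤ) * ((n : ℤ) - 1) - (k : ℤ) * ((k : ℤ) - 1)) * q ^ k *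
    (qPochhammer (q ^ (-n : ℤ)) q k / qPochhammer q q k) *
      qPochhammer (q ^ (1 - n : ℤ) / x) q k * qPochhammer c q k * qPochhammer u q (n - k) *
        qPochhammer v q (n - k)) * hcpow

theorem stmt16_general {q : K} (hq0 : q ≠ 0) {n : ℕ} (hq : ∀ j, 0 < j → j ≤ n → q ^ j ≠ 1)
    {b c d e : K} (hb : b ≠ 0) (hc : c ≠ 0) (hd : d ≠ 0) (he : e ≠ 0) :
    ∑ k ∈ range (n + 1), qPochhammer (d * q ^ k) q (n - k) * qPochhammer (e * q ^ k) q (n - k) *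
        (qPochhammer (q ^ (-n : ℤ)) q k * qPochhammer b q k * qPochhammer c q k /
          qPochhammer q q k) * (d * e * q ^ n / (b * c)) ^ k =
      c ^ n * ∑ k ∈ range (n + 1), q ^ (2 * (k : ℤ) * ((n : ℤ) - 1) - (k : ℤ) * ((k : ℤ) - 1)) *
        (d * e / (b * c ^ 2)) ^ k * qPochhammer (d / c) q (n - k) * qPochhammer (e / c) q (n - k) *
          (qPochhammer (q ^ (-n : ℤ)) q k * qPochhammer c q k *
            qPochhammer (b * c * q ^ (1 - n : ℤ) / (d * e)) q k / qPochhammer q q k) * q ^ k := by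
  have hx : d * e / (b * c) ≠ 0 := div_ne_zero (mul_ne_zero hd he) (mul_ne_zero hb hc)
  have hbx : b * (d * e / (b * c)) = c * (d / c) * (e / c) := by field_simp
  have hxq : d * e * q ^ n / (b * c) = d * e / (b * c) * q ^ n := mul_div_right_comm _ _ _
  have hxc : d * e / (b * c ^ 2) = d * e / (b * c) / c := by rw [div_div, mul_assoc, sq]
  have hqx : b * c * q ^ (1 - n : ℤ) / (d * e) = q ^ (1 - n : ℤ) / (d * e / (b * c)) := by
    field_simp
  rw [hxq, hxc, hqx, ← sheppardLeft_eq_sum hq0 hq hc, ← sheppardRight_eq_sum hq0 hq hc hx]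
  exact sheppardLeft_eq_sheppardRight q _ _ _ n hbx

end Field

/-- a q-analogue of Sheppard's transformation. -/
theorem stmt16 (q : ℝ) (hq0 : 0 < q) (hq1 : q < 1) (n : ℕ)
    (b c d e : ℂ) (hb : b ≠ 0) (hc : c ≠ 0) (hd : d ≠ 0) (he : e ≠ 0) :
    ∑ k ∈ Finset.range (n + 1),
        qp (d * (q : ℂ) ^ k) (q : ℂ) (n - k) * qp (e * (q : ℂ) ^ k) (q : ℂ) (n - k) *
          (qp ((q : ℂ) ^ (-(n : ℤ))) (q : ℂ) k * qp b (q : ℂ) k * qp c (q : ℂ) k /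
            qp (q : ℂ) (q : ℂ) k) *
          (d * e * (q : ℂ) ^ n / (b * c)) ^ k =
      c ^ n *
        ∑ k ∈ Finset.range (n + 1),
          (q : ℂ) ^ (2 * (k : ℤ) * ((n : ℤ) - 1) - (k : ℤ) * ((k : ℤ) - 1)) *
            (d * e / (b * c ^ 2)) ^ k *
            qp (d / c) (q : ℂ) (n - k) * qp (e / c) (q : ℂ) (n - k) *
            (qp ((q : ℂ) ^ (-(n : ℤ))) (q : ℂ) k * qp c (q : ℂ) k *
                qp (b * c * (q : ℂ) ^ (1 - (n : ℤ)) / (d * e)) (q : ℂ) k /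
              qp (q : ℂ) (q : ℂ) k) *
            (q : ℂ) ^ k := by
  have hq (j : ℕ) (hj : 0 < j) (_ : j ≤ n) : (q : ℂ) ^ j ≠ 1 :=
    mod_cast (pow_lt_one₀ hq0.le hq1 hj.ne').ne
  exact stmt16_general (Complex.ofReal_ne_zero.2 hq0.ne') hq hb hc hd he

end
end
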